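/- arXiv:2002.00946 — 3 statements merged into one kernel-verified Lean document; each statement's English description precedes it below -/
import Mathlib

section
/- Let m, n be positive integers and p_1, ..., p_m ∈ [1, ∞]. There exists a constant C > 0 depending only on m (not on n or on p_1, ..., p_m) such that there is a choice of signs ε_{j_1,...,j_m} ∈ {−1, 1} for which the m-linear form A : ℓ_{p_1}^n × ⋯ × ℓ_{p_m}^n → 𝕂 defined by A(z^{(1)}, ..., z^{(m)}) = Σ_{j_1,...,j_m=1}^n ε_{j_1,...,j_m} z_{j_1}^{(1)} ⋯ z_{j_m}^{(m)} satisfies ‖A‖ ≤ C · n^{1/ρ + Σ_{k=1}^m max{1/2 − 1/p_k, 0}}, where ρ := min_{1≤k≤m} max{2, p_k*} and p_k* is the conjugate exponent of p_k (with the convention 1/∞ = 0). -/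
open scoped BigOperators ENNReal

noncomputable section

/-- The `ℓ_p` norm on `𝕂^n`, for `p ∈ [1, ∞]` (sup norm when `p = ∞`). -/
def lpNorm {𝕂 : Type*} [RCLike 𝕂] (p : ℝ≥0∞) {n : ℕ} (x : Fin n → 𝕂) : ℝ :=
  if p = ∞ then ⨆ j, ‖x j‖ else (∑ j, ‖x j‖ ^ p.toReal) ^ (1 / p.toReal)

/-- The operator norm of an `m`-linear form `A : ℓ_{p 1}^{n 1} × ⋯ × ℓ_{p m}^{n m} → 𝕂`,
i.e. the supremum of `‖A x‖` over all `x` with `‖x k‖_{p k} ≤ 1` for every `k`. -/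
def opNorm {𝕂 : Type*} [RCLike 𝕂] {m : ℕ} {n : Fin m → ℕ} (p : Fin m → ℝ≥0∞)
    (A : MultilinearMap 𝕂 (fun k => Fin (n k) → 𝕂) 𝕂) : ℝ :=
  sSup {t | ∃ x : ∀ k, Fin (n k) → 𝕂, (∀ k, lpNorm (p k) (x k) ≤ 1) ∧ t = ‖A x‖}

/-- A multilinear form is unimodular if all its coefficients `A (e_{j 1}, …, e_{j m})`
have modulus 1. -/
def Unimodular {𝕂 : Type*} [RCLike 𝕂] {m : ℕ} {n : Fin m → ℕ}
    (A : MultilinearMap 𝕂 (fun k => Fin (n k) → 𝕂) 𝕂) : Prop :=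
  ∀ j : ∀ k, Fin (n k), ‖A (fun k => Pi.single (j k) 1)‖ = 1

/-- The `m`-linear form `z ↦ ∑_j c j • z^{(1)}_{j 1} ⋯ z^{(m)}_{j m}` determined by the
coefficients `c`. -/
def coeffForm {𝕂 : Type*} [RCLike 𝕂] {m : ℕ} {n : Fin m → ℕ} (c : (∀ k, Fin (n k)) → 𝕂) :
    MultilinearMap 𝕂 (fun k => Fin (n k) → 𝕂) 𝕂 :=
  ∑ j : ∀ k, Fin (n k), (MultilinearMap.mkPiRing 𝕂 (Fin m) (c j)).compLinearMap
    fun k => LinearMap.proj (j k)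

/-- The conjugate exponent `p*` of `p ∈ [1,∞]`, defined by `1/p + 1/p* = 1`. -/
def conjExp (p : ℝ≥0∞) : ℝ≥0∞ := (1 - 1/p)⁻¹

lemma ksz_signs {J τ : Type*} [Fintype J] [DecidableEq J] (T : Finset τ) (a : τ → J → ℝ)
    (ha : ∀ t ∈ T, ∑ j, a t j ^ 2 ≤ 1) (l : ℝ) :
    ∃ ε : J → ℝ, (∀ j, ε j = 1 ∨ ε j = -1) ∧
      ∀ t ∈ T, Real.exp (l * ∑ j, ε j * a t j) ≤ T.card * Real.exp (l ^ 2 / 2) := by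
  classical
  set S : Finset (J → ℝ) := Fintype.piFinset (fun _ => ({1, -1} : Finset ℝ)) with hS
  have hcard : (S.card : ℝ) = 2 ^ Fintype.card J := by
    rw [hS, Fintype.card_piFinset]
    rw [Finset.prod_const, Finset.card_pair (by norm_num)]
    simp
  have hSne : S.Nonempty := by
    rw [hS, Fintype.piFinset_nonempty]
    intro j; simp
  have key : ∑ s ∈ S, ∑ t ∈ T, Real.exp (l * ∑ j, s j * a t j) ≤
      ∑ s ∈ S, (T.card * Real.exp (l ^ 2 / 2)) := by
    rw [Finset.sum_comm, Finset.sum_const, nsmul_eq_mul, hcard]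
    have h1 : ∀ t ∈ T, ∑ s ∈ S, Real.exp (l * ∑ j, s j * a t j) ≤
        2 ^ Fintype.card J * Real.exp (l ^ 2 / 2) := by
      intro t ht
      have e1 : ∀ s : J → ℝ, Real.exp (l * ∑ j, s j * a t j) =
          ∏ j, (fun (j : J) (u : ℝ) => Real.exp (l * (u * a t j))) j (s j) := by
        intro s
        rw [Finset.mul_sum, Real.exp_sum]
      simp_rw [e1]
      rw [hS, Finset.sum_prod_piFinset ({1, -1} : Finset ℝ)
        (fun (j : J) (u : ℝ) => Real.exp (l * (u * a t j)))]
      have e2 : ∀ j, ∑ u ∈ ({1, -1} : Finset ℝ), Real.exp (l * (u * a t j)) ≤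
          2 * Real.exp ((l * a t j) ^ 2 / 2) := by
        intro j
        rw [Finset.sum_pair (by norm_num)]
        have := Real.cosh_le_exp_half_sq (l * a t j)
        rw [Real.cosh_eq] at this
        have h3 : l * (-1 * a t j) = -(l * a t j) := by ring
        rw [h3, one_mul]
        linarith
      refine (Finset.prod_le_prod (fun j _ => by positivity) (fun j _ => e2 j)).trans ?_
      rw [Finset.prod_mul_distrib, ← Real.exp_sum]
      simp only [Finset.prod_const, Finset.card_univ]
      gcongr
      have : ∑ j, (l * a t j) ^ 2 / 2 = l ^ 2 / 2 * ∑ j, a t j ^ 2 := by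
        rw [Finset.mul_sum]; congr 1; ext j; ring
      rw [this]
      nlinarith [ha t ht, sq_nonneg l]
    refine (Finset.sum_le_sum h1).trans (le_of_eq ?_)
    rw [Finset.sum_const, nsmul_eq_mul]; ring
  obtain ⟨s, hs, hle⟩ := Finset.exists_le_of_sum_le hSne key
  refine ⟨s, ?_, ?_⟩
  · intro j
    have := (Fintype.mem_piFinset.1 hs) j
    simpa using this
  · intro t ht
    exact (Finset.single_le_sum (f := fun t => Real.exp (l * ∑ j, s j * a t j))
      (fun t _ => (Real.exp_pos _).le) ht).trans hle

lemma ksz_geom (L : ℕ) : ∑ k ∈ Finset.Icc (-(L:ℤ)) L, (1/2 : ℝ) ^ k.natAbs = 3 - 2 * (1/2) ^ L := by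
  induction L with
  | zero => norm_num
  | succ L ih =>
    have : Finset.Icc (-((L+1 : ℕ):ℤ)) ((L+1 : ℕ):ℤ) =
        insert (-((L+1 : ℕ):ℤ)) (insert ((L+1 : ℕ):ℤ) (Finset.Icc (-(L:ℤ)) L)) := by
      ext k; simp only [Finset.mem_Icc, Finset.mem_insert]; push_cast; omega
    rw [this, Finset.sum_insert, Finset.sum_insert, ih]
    · rw [Int.natAbs_neg, Int.natAbs_natCast, pow_succ]; ring
    · simp
    · simp only [Finset.mem_insert, Finset.mem_Icc]; push_cast; omega

def kszNet (n : ℕ) : Finset (Fin n → ℤ) :=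
  (Fintype.piFinset fun _ => Finset.Icc (-((4*n : ℕ):ℤ)) ((4*n : ℕ):ℤ)).filter
    (fun k => ∑ j, k j ^ 2 ≤ 4 * n)

lemma kszNet_card (n : ℕ) : ((kszNet n).card : ℝ) ≤ 48 ^ n := by
  have h1 : ((kszNet n).card : ℝ) ≤ ∑ k ∈ kszNet n, 2 ^ (4 * n) * ∏ j, (1/2 : ℝ) ^ (k j).natAbs := by
    rw [Finset.card_eq_sum_ones]; push_cast
    refine Finset.sum_le_sum fun k hk => ?_
    rw [Finset.prod_pow_eq_pow_sum]
    have : ∑ j, (k j).natAbs ≤ 4 * n := by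
      have h2 := (Finset.mem_filter.1 hk).2
      zify
      refine le_trans (Finset.sum_le_sum fun j _ => ?_) h2
      rw [← sq_abs]
      nlinarith [abs_nonneg (k j), Int.le_self_sq (|k j|)]
    have h3 : (1/2 : ℝ) ^ (4 * n) ≤ (1/2 : ℝ) ^ (∑ j, (k j).natAbs) :=
      pow_le_pow_of_le_one (by norm_num) (by norm_num) this
    calc (1:ℝ) = 2 ^ (4 * n) * (1/2) ^ (4 * n) := by rw [← mul_pow]; norm_num
      _ ≤ _ := by gcongr
  refine h1.trans ?_
  rw [← Finset.mul_sum]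
  have h2 : ∑ k ∈ kszNet n, ∏ j, (1/2 : ℝ) ^ (k j).natAbs ≤
      ∑ k ∈ Fintype.piFinset fun _ : Fin n => Finset.Icc (-((4*n : ℕ):ℤ)) ((4*n : ℕ):ℤ),
        ∏ j, (fun (_ : Fin n) (u : ℤ) => (1/2 : ℝ) ^ u.natAbs) j (k j) :=
    Finset.sum_le_sum_of_subset_of_nonneg (Finset.filter_subset _ _)
      (fun k _ _ => Finset.prod_nonneg fun j _ => by positivity)
  rw [Finset.sum_prod_piFinset (Finset.Icc (-((4*n : ℕ):ℤ)) ((4*n : ℕ):ℤ))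
    (fun (_ : Fin n) (u : ℤ) => (1/2 : ℝ) ^ u.natAbs)] at h2
  simp_rw [ksz_geom] at h2
  have h3 : ∏ _j : Fin n, (3 - 2 * (1/2 : ℝ) ^ (4*n)) ≤ 3 ^ n := by
    rw [Finset.prod_const, Finset.card_univ, Fintype.card_fin]
    have h5 : (1/2 : ℝ) ^ (4*n) ≤ 1 := pow_le_one₀ (by norm_num) (by norm_num)
    have h6 : 0 ≤ (1/2 : ℝ) ^ (4*n) := by positivity
    exact pow_le_pow_left₀ (by linarith) (by linarith) _
  calc (2:ℝ) ^ (4*n) * _ ≤ 2 ^ (4*n) * 3 ^ n := by gcongr; exact h2.trans h3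
    _ = 48 ^ n := by rw [pow_mul, ← mul_pow]; norm_num

/-- the real vectors of the net -/
def kszVec {n : ℕ} (k : Fin n → ℤ) : Fin n → ℝ := fun j => k j / (2 * √n)

lemma kszVec_sq {n : ℕ} (hn : 0 < n) {k : Fin n → ℤ} (hk : k ∈ kszNet n) :
    ∑ j, kszVec k j ^ 2 ≤ 1 := by
  have h2 := (Finset.mem_filter.1 hk).2
  have h3 : (∑ j, (k j : ℝ) ^ 2) ≤ 4 * n := by exact_mod_cast h2
  have hn' : (0:ℝ) < n := by exact_mod_cast hn
  simp only [kszVec, div_pow, mul_pow, Real.sq_sqrt hn'.le]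
  rw [← Finset.sum_div, div_le_one (by positivity)]
  linarith

lemma ksz_round {n : ℕ} (hn : 0 < n) (x : Fin n → ℝ) (hx : ∑ j, x j ^ 2 ≤ 1) :
    ∃ k ∈ kszNet n, ∑ j, (2 * (x j - kszVec k j)) ^ 2 ≤ 1 := by
  have hn' : (0:ℝ) < n := by exact_mod_cast hn
  have hs : 0 < √(n:ℝ) := Real.sqrt_pos.2 hn'
  have hss : √(n:ℝ) ^ 2 = n := Real.sq_sqrt hn'.le
  have h : ∀ t : ℝ, ∃ k : ℤ, (k:ℝ) ^ 2 ≤ t ^ 2 ∧ (t - k) ^ 2 ≤ 1 := by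
    intro t
    rcases le_total 0 t with h | h
    · refine ⟨⌊t⌋, ?_, ?_⟩
      · have : (0:ℝ) ≤ ⌊t⌋ := by exact_mod_cast Int.floor_nonneg.2 h
        nlinarith [Int.floor_le t]
      · nlinarith [Int.floor_le t, Int.lt_floor_add_one t]
    · refine ⟨⌈t⌉, ?_, ?_⟩
      · have : (⌈t⌉:ℝ) ≤ 0 := by exact_mod_cast Int.ceil_le.2 (by simpa using h)
        nlinarith [Int.le_ceil t]
      · nlinarith [Int.le_ceil t, Int.ceil_lt_add_one t]
  choose r hr1 hr2 using h
  refine ⟨fun j => r (2 * √n * x j), ?_, ?_⟩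
  · have hsum : ∑ j, (r (2 * √n * x j)) ^ 2 ≤ 4 * (n:ℤ) := by
      have : ∑ j, (r (2 * √n * x j) : ℝ) ^ 2 ≤ 4 * (n:ℝ) := by
        calc _ ≤ ∑ j, (2 * √n * x j) ^ 2 := Finset.sum_le_sum fun j _ => hr1 _
          _ = 4 * n * ∑ j, x j ^ 2 := by
            rw [Finset.mul_sum]; congr 1; ext j; rw [mul_pow, mul_pow, hss]; ring
          _ ≤ 4 * n * 1 := by gcongr
          _ = _ := by ring
      exact_mod_cast this
    refine Finset.mem_filter.2 ⟨Fintype.mem_piFinset.2 fun j => ?_, hsum⟩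
    have h1 : (r (2 * √n * x j)) ^ 2 ≤ 4 * (n:ℤ) :=
      (Finset.single_le_sum (f := fun j => (r (2 * √n * x j)) ^ 2) (fun _ _ => sq_nonneg _)
        (Finset.mem_univ j)).trans hsum
    rw [Finset.mem_Icc, ← abs_le]; push_cast
    rw [← sq_abs] at h1
    nlinarith [Int.le_self_sq (|r (2 * √n * x j)|)]
  · have : ∀ j, (2 * (x j - kszVec (fun j => r (2 * √n * x j)) j)) ^ 2 ≤ 1 / n := by
      intro j
      have e : 2 * (x j - kszVec (fun j => r (2 * √n * x j)) j) =
          (2 * √n * x j - r (2 * √n * x j)) / √n := by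
        simp only [kszVec]; field_simp
      rw [e, div_pow, hss]
      gcongr
      exact hr2 _
    refine (Finset.sum_le_sum fun j _ => this j).trans ?_
    rw [Finset.sum_const, Finset.card_univ, Fintype.card_fin, nsmul_eq_mul]
    field_simp; rfl

lemma ksz_neg_mem {n : ℕ} {k : Fin n → ℤ} (hk : k ∈ kszNet n) : -k ∈ kszNet n := by
  rw [kszNet, Finset.mem_filter, Fintype.mem_piFinset] at *
  refine ⟨fun j => ?_, by simpa using hk.2⟩
  have := hk.1 j
  rw [Finset.mem_Icc] at *
  simp only [Pi.neg_apply]; omega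

lemma ksz_net_signs (m n : ℕ) (hm : 0 < m) (hn : 0 < n) :
    ∃ ε : (Fin m → Fin n) → ℝ, (∀ j, ε j = 1 ∨ ε j = -1) ∧
      ∀ y : Fin m → Fin n → ℤ, (∀ k, y k ∈ kszNet n) →
        |∑ j, ε j * ∏ k, kszVec (y k) (j k)| ≤ (m * Real.log 48 + 1) * √n := by
  classical
  have hn' : (0:ℝ) < n := by exact_mod_cast hn
  have hs : 0 < √(n:ℝ) := Real.sqrt_pos.2 hn'
  have hss : √(n:ℝ) ^ 2 = n := Real.sq_sqrt hn'.le
  obtain ⟨ε, h1, h2⟩ := ksz_signs (J := Fin m → Fin n)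
    (Fintype.piFinset fun _ : Fin m => kszNet n) (fun y j => ∏ k, kszVec (y k) (j k))
    (by
      intro y hy
      simp_rw [← Finset.prod_pow]
      have := Finset.prod_univ_sum (fun _ : Fin m => (Finset.univ : Finset (Fin n)))
        (fun k i => kszVec (y k) i ^ 2)
      rw [Fintype.piFinset_univ] at this
      rw [← this]
      exact Finset.prod_le_one (fun k _ => Finset.sum_nonneg fun _ _ => sq_nonneg _)
        (fun k _ => kszVec_sq hn (Fintype.mem_piFinset.1 hy k))) √n
  refine ⟨ε, h1, ?_⟩
  have main : ∀ y : Fin m → Fin n → ℤ, (∀ k, y k ∈ kszNet n) →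
        ∑ j, ε j * ∏ k, kszVec (y k) (j k) ≤ (m * Real.log 48 + 1) * √n := by
    intro y hy
    have h3 := h2 y (Fintype.mem_piFinset.2 hy)
    have hc : ((Fintype.piFinset fun _ : Fin m => kszNet n).card : ℝ) ≤
        Real.exp (n * m * Real.log 48) := by
      rw [Fintype.card_piFinset, Finset.prod_const, Finset.card_univ, Fintype.card_fin]
      push_cast
      rw [mul_comm, Real.exp_mul, Real.exp_log (by norm_num), mul_comm, ← Nat.cast_mul, Real.rpow_natCast,
        mul_comm, pow_mul]
      gcongr
      exact kszNet_card n
    have h4 := h3.trans (mul_le_mul_of_nonneg_right hc (Real.exp_pos _).le)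
    rw [← Real.exp_add, Real.exp_le_exp, hss] at h4
    set S := ∑ j, ε j * ∏ k, kszVec (y k) (j k)
    have h5 : √n * S ≤ √n * ((m * Real.log 48 + 1) * √n) := by
      calc _ ≤ _ := h4
        _ ≤ (m * Real.log 48 + 1) * (√n)^2 := by rw [hss]; nlinarith
        _ = _ := by ring
    exact le_of_mul_le_mul_left h5 hs
  intro y hy
  rw [abs_le]
  refine ⟨?_, main y hy⟩
  have := main (Function.update y ⟨0, hm⟩ (-(y ⟨0, hm⟩))) (by
    intro k
    by_cases hk : k = ⟨0, hm⟩
    · subst hk; simpa using ksz_neg_mem (hy _)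
    · simpa [Function.update_of_ne hk] using hy k)
  have e : ∀ j : Fin m → Fin n, ∏ k, kszVec (Function.update y ⟨0, hm⟩ (-(y ⟨0, hm⟩)) k) (j k) =
      - ∏ k, kszVec (y k) (j k) := by
    intro j
    rw [← Finset.mul_prod_erase _ _ (Finset.mem_univ (⟨0, hm⟩ : Fin m)),
      ← Finset.mul_prod_erase _ (fun k => kszVec (y k) (j k)) (Finset.mem_univ (⟨0, hm⟩ : Fin m)),
      ← neg_mul]
    congr 1
    · simp [kszVec]; ring
    · refine Finset.prod_congr rfl fun k hk => ?_
      rw [Function.update_of_ne (Finset.ne_of_mem_erase hk)]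
  simp_rw [e, mul_neg, Finset.sum_neg_distrib] at this
  linarith

lemma ksz_multi {𝕂 E : Type*} [RCLike 𝕂] [AddCommGroup E] [Module 𝕂 E] {m : ℕ}
    (A : MultilinearMap 𝕂 (fun _ : Fin m => E) 𝕂) (N B : Fin m → Set E) (c K : ℝ)
    (h : ∀ k (φ : E →ₗ[𝕂] 𝕂) (K : ℝ), (∀ y ∈ N k, ‖φ y‖ ≤ K) → ∀ x ∈ B k, ‖φ x‖ ≤ c * K)
    (hA : ∀ y, (∀ k, y k ∈ N k) → ‖A y‖ ≤ K) :
    ∀ x, (∀ k, x k ∈ B k) → ‖A x‖ ≤ c ^ m * K := by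
  classical
  have key : ∀ s : Finset (Fin m), ∀ x, (∀ k ∈ s, x k ∈ B k) → (∀ k, k ∉ s → x k ∈ N k) →
      ‖A x‖ ≤ c ^ s.card * K := by
    intro s
    induction s using Finset.induction_on with
    | empty =>
      intro x _ hx
      simpa using hA x fun k => hx k (by simp)
    | insert a s ha ih =>
      intro x hx hx'
      have := h a (A.toLinearMap x a) (c ^ s.card * K) (by
        intro y hy
        rw [MultilinearMap.toLinearMap_apply]
        apply ih
        · intro k hk
          have : k ≠ a := fun e => ha (e ▸ hk)
          rw [Function.update_of_ne this]
          exact hx k (Finset.mem_insert_of_mem hk)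
        · intro k hk
          by_cases e : k = a
          · subst e; simpa using hy
          · rw [Function.update_of_ne e]
            exact hx' k (by simp [e, hk])) (x a) (hx a (Finset.mem_insert_self _ _))
      rw [MultilinearMap.toLinearMap_apply, Function.update_eq_self] at this
      rw [Finset.card_insert_of_notMem ha, pow_succ]
      linarith
  intro x hx
  simpa using key Finset.univ x (fun k _ => hx k) (by simp)

lemma ksz_reim {𝕂 : Type*} [RCLike 𝕂] {n : ℕ} (φ : (Fin n → 𝕂) →ₗ[𝕂] 𝕂) (x : Fin n → 𝕂) :
    ‖φ x‖ ≤ ‖φ (fun j => (RCLike.re (x j) : 𝕂))‖ + ‖φ (fun j => (RCLike.im (x j) : 𝕂))‖ := by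
  have e : x = (fun j => (RCLike.re (x j) : 𝕂)) + (RCLike.I : 𝕂) • (fun j => (RCLike.im (x j) : 𝕂)) := by
    ext j
    simp only [Pi.add_apply, Pi.smul_apply, smul_eq_mul]
    conv_lhs => rw [← RCLike.re_add_im (x j)]
    ring
  conv_lhs => rw [e, map_add, map_smul]
  refine (norm_add_le _ _).trans ?_
  gcongr
  rw [norm_smul]
  refine mul_le_of_le_one_left (norm_nonneg _) ?_
  rcases RCLike.I_eq_zero_or_im_I_eq_one (K := 𝕂) with h | h
  · simp [h]
  · exact (RCLike.norm_I_of_ne_zero (by intro h0; simp [h0] at h)).le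

lemma ksz_net_ball {n : ℕ} (hn : 0 < n) (φ : (Fin n → ℂ) →ₗ[ℂ] ℂ) (K : ℝ)
    (h : ∀ k ∈ kszNet n, ‖φ (fun j => (kszVec k j : ℂ))‖ ≤ K) (x : Fin n → ℝ)
    (hx : ∑ j, x j ^ 2 ≤ 1) : ‖φ (fun j => (x j : ℂ))‖ ≤ 2 * K := by
  set S : Set ℝ := {t | ∃ y : Fin n → ℝ, ∑ j, y j ^ 2 ≤ 1 ∧ t = ‖φ (fun j => (y j : ℂ))‖} with hS
  have hb : BddAbove S := by
    refine ⟨∑ j, ‖φ (Pi.single j 1)‖, ?_⟩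
    rintro t ⟨y, hy, rfl⟩
    have e : φ (fun j => (y j : ℂ)) = ∑ j, (y j : ℂ) * φ (Pi.single j 1) := by
      rw [LinearMap.pi_apply_eq_sum_univ φ]
      refine Finset.sum_congr rfl fun j _ => ?_
      rw [smul_eq_mul]
      congr 2
      ext i
      simp [Pi.single_apply, eq_comm]
    rw [e]
    refine (norm_sum_le _ _).trans (Finset.sum_le_sum fun j _ => ?_)
    rw [norm_mul]
    refine mul_le_of_le_one_left (norm_nonneg _) ?_
    rw [Complex.norm_real, Real.norm_eq_abs, ← sq_le_one_iff_abs_le_one]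
    exact (Finset.single_le_sum (f := fun j => y j ^ 2) (fun _ _ => sq_nonneg _)
      (Finset.mem_univ j)).trans hy
  have hM : sSup S ≤ K + sSup S / 2 := by
    refine csSup_le ⟨_, x, hx, rfl⟩ ?_
    rintro t ⟨y, hy, rfl⟩
    obtain ⟨k, hk, hk2⟩ := ksz_round hn y hy
    have h1 := h k hk
    have h2 : ‖φ (fun j => ((2 * (y j - kszVec k j) : ℝ) : ℂ))‖ ≤ sSup S :=
      le_csSup hb ⟨fun j => 2 * (y j - kszVec k j), hk2, rfl⟩
    have e : (fun j => (y j : ℂ)) = (fun j => (kszVec k j : ℂ)) +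
        (1/2 : ℂ) • (fun j => ((2 * (y j - kszVec k j) : ℝ) : ℂ)) := by
      ext j
      simp only [Pi.add_apply, Pi.smul_apply, smul_eq_mul]
      push_cast; ring
    rw [e, map_add, map_smul]
    refine (norm_add_le _ _).trans ?_
    rw [norm_smul]
    have : ‖(1/2 : ℂ)‖ = 1/2 := by norm_num
    rw [this]
    linarith
  have := le_csSup hb ⟨x, hx, rfl⟩
  linarith

lemma coeffForm_apply' {𝕂 : Type*} [RCLike 𝕂] {m n : ℕ} (c : (Fin m → Fin n) → 𝕂)
    (x : Fin m → Fin n → 𝕂) :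
    coeffForm (n := fun _ => n) c x = ∑ j, c j * ∏ k, x k (j k) := by
  simp only [coeffForm, _root_.sum_apply]
  refine Finset.sum_congr rfl fun j _ => ?_
  simp [MultilinearMap.compLinearMap_apply, mul_comm]

lemma ksz_l2 (m : ℕ) (hm : 0 < m) : ∃ C : ℝ, 1 ≤ C ∧ ∀ n : ℕ, 0 < n →
    ∃ ε : (Fin m → Fin n) → ℝ, (∀ j, ε j = 1 ∨ ε j = -1) ∧
      ∀ x : Fin m → Fin n → ℂ, (∀ k, ∑ j, ‖x k j‖ ^ 2 ≤ 1) →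
        ‖∑ j, (ε j : ℂ) * ∏ k, x k (j k)‖ ≤ C * √n := by
  have hlog : 0 ≤ Real.log 48 := Real.log_nonneg (by norm_num)
  refine ⟨4 ^ m * (m * Real.log 48 + 1), ?_, ?_⟩
  · have h1 : (1:ℝ) ≤ 4 ^ m := one_le_pow₀ (by norm_num)
    have h2 : (1:ℝ) ≤ m * Real.log 48 + 1 := by
      have : 0 ≤ m * Real.log 48 := by positivity
      linarith
    nlinarith
  intro n hn
  obtain ⟨ε, h1, h2⟩ := ksz_net_signs m n hm hn
  refine ⟨ε, h1, ?_⟩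
  have := ksz_multi (E := Fin n → ℂ) (coeffForm (𝕂 := ℂ) (n := fun _ => n) (fun j => (ε j : ℂ)))
    (fun _ => {x | ∃ k ∈ kszNet n, x = fun j => (kszVec k j : ℂ)})
    (fun _ => {x | ∑ j, ‖x j‖ ^ 2 ≤ 1}) 4 ((m * Real.log 48 + 1) * √n) (by
      intro _ φ K hK x hx
      refine (ksz_reim φ x).trans ?_
      have hK' : ∀ k ∈ kszNet n, ‖φ (fun j => (kszVec k j : ℂ))‖ ≤ K :=
        fun k hk => hK _ ⟨k, hk, rfl⟩
      have hx' : ∑ j, ‖x j‖ ^ 2 ≤ 1 := hx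
      have a1 := ksz_net_ball hn φ K hK' (fun j => (x j).re) (by
        refine (Finset.sum_le_sum fun j _ => ?_).trans hx'
        rw [← sq_abs]; gcongr; exact Complex.abs_re_le_norm _)
      have a2 := ksz_net_ball hn φ K hK' (fun j => (x j).im) (by
        refine (Finset.sum_le_sum fun j _ => ?_).trans hx'
        rw [← sq_abs]; gcongr; exact Complex.abs_im_le_norm _)
      simp only [RCLike.re_eq_complex_re, RCLike.im_eq_complex_im] at *
      have a3 := add_le_add a1 a2
      refine a3.trans (le_of_eq (by ring))) (by
      intro y hy
      choose k hk hyk using hy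
      have := h2 k hk
      rw [coeffForm_apply']
      have e : ∑ j, (ε j : ℂ) * ∏ i, y i (j i) =
        ((∑ j, ε j * ∏ i, kszVec (k i) (j i) : ℝ) : ℂ) := by
        push_cast
        refine Finset.sum_congr rfl fun j _ => ?_
        congr 1
        refine Finset.prod_congr rfl fun i _ => ?_
        rw [hyk i]
      rw [e, Complex.norm_real, Real.norm_eq_abs]
      exact this)
  intro x hx
  have h := this x hx
  rw [coeffForm_apply'] at h
  linarith

lemma ksz_l1 {m n : ℕ} (ε : (Fin m → Fin n) → ℝ) (hε : ∀ j, ε j = 1 ∨ ε j = -1)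
    (x : Fin m → Fin n → ℂ) :
    ‖∑ j, (ε j : ℂ) * ∏ k, x k (j k)‖ ≤ ∏ k, ∑ i, ‖x k i‖ := by
  have := Finset.prod_univ_sum (fun _ : Fin m => (Finset.univ : Finset (Fin n)))
        (fun k i => ‖x k i‖)
  rw [Fintype.piFinset_univ] at this
  rw [this]
  refine (norm_sum_le _ _).trans (Finset.sum_le_sum fun j _ => ?_)
  rw [norm_mul, norm_prod]
  rcases hε j with h | h <;> simp [h]

/-- analytic family -/
def kszFam (P : ℝ) (w z : ℂ) : ℂ :=
  if w = 0 then 0 else (w / ‖w‖) * ((‖w‖ : ℝ) : ℂ) ^ ((P : ℂ) * (1 - z / 2))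

lemma kszFam_norm {P : ℝ} (hP : 0 < P) (w z : ℂ) (hz : z.re ≤ 1) :
    ‖kszFam P w z‖ = ‖w‖ ^ (P * (1 - z.re / 2)) := by
  unfold kszFam
  split_ifs with h
  · rw [h, norm_zero, Real.zero_rpow]
    have : 0 < P * (1 - z.re / 2) := mul_pos hP (by linarith)
    exact this.ne'
  · have h0 : 0 < ‖w‖ := norm_pos_iff.2 h
    rw [norm_mul, norm_div, Complex.norm_real, norm_norm, div_self h0.ne', one_mul,
      Complex.norm_cpow_eq_rpow_re_of_pos h0]
    congr 1
    simp

lemma kszFam_diff (P : ℝ) (w : ℂ) : Differentiable ℂ (kszFam P w) := by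
  unfold kszFam
  by_cases h : w = 0
  · simp [h]
  · simp only [h, if_false]
    have h0 : ((‖w‖ : ℝ) : ℂ) ≠ 0 := by simpa using h
    refine Differentiable.const_mul ?_ _
    intro z
    refine DifferentiableAt.const_cpow (by fun_prop) (Or.inl h0)

lemma kszFam_self {P : ℝ} (hP : 0 < P) (w : ℂ) : kszFam P w ((2 * (1 - 1 / P) : ℝ) : ℂ) = w := by
  unfold kszFam
  split_ifs with h
  · exact h.symm
  · have h0 : ((‖w‖ : ℝ) : ℂ) ≠ 0 := by simpa using h
    have : (P : ℂ) * (1 - ((2 * (1 - 1 / P) : ℝ) : ℂ) / 2) = 1 := by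
      have : (P : ℂ) ≠ 0 := by exact_mod_cast hP.ne'
      push_cast; field_simp; ring
    rw [this, Complex.cpow_one, div_mul_cancel₀ _ h0]

lemma ksz_interp {m n : ℕ} (ε : (Fin m → Fin n) → ℝ) (hε : ∀ j, ε j = 1 ∨ ε j = -1)
    {C : ℝ} (hC : 1 ≤ C)
    (h2 : ∀ x : Fin m → Fin n → ℂ, (∀ k, ∑ j, ‖x k j‖ ^ 2 ≤ 1) →
        ‖∑ j, (ε j : ℂ) * ∏ k, x k (j k)‖ ≤ C * √n)
    {P : ℝ} (hP : 1 ≤ P) (hP2 : P ≤ 2) (x : Fin m → Fin n → ℂ)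
    (hx : ∀ k, ∑ j, ‖x k j‖ ^ P ≤ 1) :
    ‖∑ j, (ε j : ℂ) * ∏ k, x k (j k)‖ ≤ C * (n:ℝ) ^ (1 - 1 / P) := by
  have hP0 : 0 < P := by linarith
  have hx1 : ∀ k j, ‖x k j‖ ≤ 1 := by
    intro k j
    have := (Finset.single_le_sum (f := fun j => ‖x k j‖ ^ P)
      (fun _ _ => by positivity) (Finset.mem_univ j)).trans (hx k)
    by_contra hcon
    push Not at hcon
    exact absurd this (not_le.2 (Real.one_lt_rpow hcon hP0))
  set f : ℂ → ℂ := fun z => ∑ j, (ε j : ℂ) * ∏ k, kszFam P (x k (j k)) z with hf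
  set θ : ℝ := 2 * (1 - 1 / P) with hθ
  have hinv : 1 / P ≤ 1 := by rw [div_le_one hP0]; exact hP
  have hinv2 : 1 / 2 ≤ 1 / P := one_div_le_one_div_of_le hP0 hP2
  have hθ0 : 0 ≤ θ := by rw [hθ]; linarith
  have hθ1 : θ ≤ 1 := by rw [hθ]; linarith
  have hd : Differentiable ℂ f := by
    rw [hf]
    refine Differentiable.fun_sum fun j _ => ?_
    refine Differentiable.const_mul ?_ _
    exact Differentiable.fun_finsetProd fun k _ => kszFam_diff P _
  have hfθ : f (θ : ℂ) = ∑ j, (ε j : ℂ) * ∏ k, x k (j k) := by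
    simp only [hf, hθ, kszFam_self hP0]
  have key := Complex.HadamardThreeLines.norm_le_interp_of_mem_verticalClosedStrip₀₁' f
    (z := (θ : ℂ)) (a := 1) (b := C * √n) (by
      simp only [Complex.HadamardThreeLines.verticalClosedStrip, Set.mem_preimage, Complex.ofReal_re,
        Set.mem_Icc]
      exact ⟨hθ0, hθ1⟩) hd.diffContOnCl (by
      refine ⟨∏ k : Fin m, ∑ i : Fin n, 1, ?_⟩
      rintro _ ⟨z, hz, rfl⟩
      simp only [Complex.HadamardThreeLines.verticalClosedStrip, Set.mem_preimage,
        Set.mem_Icc] at hz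
      refine (ksz_l1 ε hε (fun k i => kszFam P (x k i) z)).trans ?_
      refine Finset.prod_le_prod (fun k _ => Finset.sum_nonneg fun _ _ => norm_nonneg _) fun k _ => ?_
      refine Finset.sum_le_sum fun i _ => ?_
      rw [kszFam_norm hP0 _ _ hz.2]
      exact Real.rpow_le_one (norm_nonneg _) (hx1 k i) (mul_nonneg hP0.le (by linarith [hz.2]))) (by
      intro z hz
      have hz' : z.re = 0 := hz
      refine (ksz_l1 ε hε (fun k i => kszFam P (x k i) z)).trans ?_
      refine Finset.prod_le_one (fun k _ => Finset.sum_nonneg fun _ _ => norm_nonneg _) fun k _ => ?_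
      refine le_trans (le_of_eq (Finset.sum_congr rfl fun i _ => ?_)) (hx k)
      rw [kszFam_norm hP0 _ _ (by linarith), hz']; congr 1; ring) (by
      intro z hz
      have hz' : z.re = 1 := hz
      refine h2 (fun k i => kszFam P (x k i) z) fun k => ?_
      refine le_trans (le_of_eq (Finset.sum_congr rfl fun i _ => ?_)) (hx k)
      rw [kszFam_norm hP0 _ _ (by linarith), hz', ← Real.rpow_natCast, ← Real.rpow_mul (norm_nonneg _)]
      congr 1; push_cast; ring)
  rw [hfθ, Complex.ofReal_re, Real.one_rpow, one_mul, Real.mul_rpow (by linarith) (by positivity),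
    Real.sqrt_eq_rpow, ← Real.rpow_mul (by positivity)] at key
  refine key.trans ?_
  have e : 1 / 2 * θ = 1 - 1 / P := by rw [hθ]; ring
  rw [e]
  gcongr
  calc C ^ θ ≤ C ^ (1:ℝ) := Real.rpow_le_rpow_of_exponent_le hC hθ1
    _ = C := Real.rpow_one C

lemma lpNorm_le_one {𝕂 : Type*} [RCLike 𝕂] {p : ℝ≥0∞} (hp : 1 ≤ p) (hp' : p ≠ ∞) {n : ℕ}
    {x : Fin n → 𝕂} (h : lpNorm p x ≤ 1) : ∑ j, ‖x j‖ ^ p.toReal ≤ 1 := by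
  rw [lpNorm, if_neg hp'] at h
  have h1 : 0 < p.toReal := ENNReal.toReal_pos (by positivity) hp'
  by_contra hcon
  push Not at hcon
  exact absurd h (not_le.2 (Real.one_lt_rpow hcon (by positivity)))

lemma lpNorm_coord {𝕂 : Type*} [RCLike 𝕂] {p : ℝ≥0∞} (hp : 1 ≤ p) {n : ℕ}
    {x : Fin n → 𝕂} (h : lpNorm p x ≤ 1) (j : Fin n) : ‖x j‖ ≤ 1 := by
  by_cases hp' : p = ∞
  · rw [lpNorm, if_pos hp'] at h
    exact (le_ciSup (f := fun j => ‖x j‖) (Set.finite_range _).bddAbove j).trans h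
  · have := (Finset.single_le_sum (f := fun j => ‖x j‖ ^ p.toReal)
      (fun _ _ => by positivity) (Finset.mem_univ j)).trans (lpNorm_le_one hp hp' h)
    by_contra hcon
    push Not at hcon
    exact absurd this (not_le.2 (Real.one_lt_rpow hcon (ENNReal.toReal_pos (by positivity) hp')))

lemma lpNorm_mono {𝕂 𝕃 : Type*} [RCLike 𝕂] [RCLike 𝕃] {p : ℝ≥0∞} {n : ℕ}
    {x : Fin n → 𝕂} {y : Fin n → 𝕃} (h : ∀ j, ‖x j‖ ≤ ‖y j‖) : lpNorm p x ≤ lpNorm p y := by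
  unfold lpNorm
  split_ifs with hp
  · exact ciSup_mono (Set.finite_range _).bddAbove h
  · refine Real.rpow_le_rpow (Finset.sum_nonneg fun _ _ => by positivity)
      (Finset.sum_le_sum fun j _ => ?_) (by positivity)
    exact Real.rpow_le_rpow (norm_nonneg _) (h j) ENNReal.toReal_nonneg

lemma ksz_l2_of_lp {n : ℕ} (hn : 0 < n) {p : ℝ≥0∞} (hp : 1 ≤ p) (x : Fin n → ℂ)
    (h : lpNorm p x ≤ 1) :
    ∑ j, ‖x j‖ ^ 2 ≤ ((n:ℝ) ^ (max ((1 : ℝ) / 2 - (1 / p).toReal) 0)) ^ 2 := by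
  have hn' : (0:ℝ) < n := by exact_mod_cast hn
  have hn1 : (1:ℝ) ≤ n := by exact_mod_cast hn
  by_cases hp' : p = ∞
  · subst hp'
    have : max ((1 : ℝ) / 2 - (1 / (∞ : ℝ≥0∞)).toReal) 0 = 1 / 2 := by simp
    rw [this, ← Real.sqrt_eq_rpow, Real.sq_sqrt hn'.le]
    calc _ ≤ ∑ j : Fin n, (1:ℝ) := Finset.sum_le_sum fun j _ =>
          pow_le_one₀ (norm_nonneg _) (lpNorm_coord hp h j)
      _ = n := by simp
  have h1 := lpNorm_le_one hp hp' h
  have hP : 1 ≤ p.toReal := by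
    rw [← ENNReal.toReal_one]; exact ENNReal.toReal_mono hp' hp
  have e : (1 / p).toReal = 1 / p.toReal := by simp
  rw [e]
  set P := p.toReal
  have hP0 : 0 < P := by linarith
  rcases le_total P 2 with h2 | h2
  · calc _ ≤ ∑ j, ‖x j‖ ^ P := by
          refine Finset.sum_le_sum fun j _ => ?_
          rw [← Real.rpow_natCast]
          rcases eq_or_lt_of_le (norm_nonneg (x j)) with h0 | h0
          · rw [← h0, Real.zero_rpow hP0.ne', Real.zero_rpow (by norm_num)]
          · exact Real.rpow_le_rpow_of_exponent_ge h0 (lpNorm_coord hp h j) (by exact_mod_cast h2)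
      _ ≤ 1 := h1
      _ ≤ _ := one_le_pow₀ (Real.one_le_rpow hn1 (le_max_right _ _))
  · have hm : max ((1 : ℝ) / 2 - 1 / P) 0 = 1 / 2 - 1 / P := max_eq_left (by
      have := one_div_le_one_div_of_le (by norm_num) h2
      linarith)
    rw [hm, ← Real.rpow_natCast, ← Real.rpow_mul hn'.le]
    have key := Real.rpow_arith_mean_le_arith_mean_rpow Finset.univ (fun _ : Fin n => (1:ℝ) / n)
      (fun j => ‖x j‖ ^ 2) (fun _ _ => by positivity) (by simp [hn'.ne']) (fun _ _ => by positivity)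
      (p := P / 2) (by linarith)
    rw [← Finset.mul_sum, ← Finset.mul_sum] at key
    have e2 : ∀ j, (‖x j‖ ^ 2) ^ (P / 2) = ‖x j‖ ^ P := by
      intro j
      rw [← Real.rpow_natCast, ← Real.rpow_mul (norm_nonneg _)]
      congr 1; push_cast; ring
    simp_rw [e2] at key
    have k2 : (1 / n * ∑ j, ‖x j‖ ^ 2) ^ (P / 2) ≤ 1 / (n:ℝ) :=
      key.trans (mul_le_of_le_one_right (by positivity) h1)
    have hS : 0 ≤ ∑ j, ‖x j‖ ^ 2 := Finset.sum_nonneg fun _ _ => by positivity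
    have k3 := Real.rpow_le_rpow (by positivity) k2 (z := 2 / P) (by positivity)
    rw [← Real.rpow_mul (by positivity)] at k3
    have e3 : P / 2 * (2 / P) = 1 := by field_simp
    rw [e3, Real.rpow_one, one_div, Real.inv_rpow hn'.le, inv_mul_le_iff₀ hn'] at k3
    refine k3.trans (le_of_eq ?_)
    have e4 : (1 / 2 - 1 / P) * ((2:ℕ):ℝ) = 1 - 2 / P := by push_cast; ring
    rw [e4, Real.rpow_sub hn', Real.rpow_one]
    rfl

lemma ksz_exp {m : ℕ} (p : Fin m → ℝ≥0∞) (hp : ∀ k, 1 ≤ p k) (k : Fin m) :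
    min (1/2) (1 - (1 / p k).toReal) ≤ (1 / ⨅ k, max 2 (conjExp (p k))).toReal := by
  have h1 : 1 / max 2 (conjExp (p k)) ≤ 1 / ⨅ k, max 2 (conjExp (p k)) := by
    rw [one_div, one_div]
    exact ENNReal.inv_le_inv.2 (iInf_le _ k)
  have h2 : (1 / ⨅ k, max 2 (conjExp (p k))) ≠ ∞ := by
    rw [one_div]
    refine ENNReal.inv_ne_top.2 ?_
    have : (2 : ℝ≥0∞) ≤ ⨅ k, max 2 (conjExp (p k)) := le_iInf fun k => le_max_left _ _
    intro h0
    rw [h0] at this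
    norm_num at this
  refine le_trans ?_ (ENNReal.toReal_mono h2 h1)
  have hle : 1 / p k ≤ 1 := by rw [one_div]; exact ENNReal.inv_le_one.2 (hp k)
  have e : (1 - (1 / p k).toReal) = (1 - 1 / p k).toReal := by
    rw [ENNReal.toReal_sub_of_le hle (by simp)]; simp
  rw [e]
  rcases le_total 2 (conjExp (p k)) with h | h
  · rw [max_eq_right h, conjExp, one_div ((_ : ℝ≥0∞)⁻¹), inv_inv]
    exact min_le_right _ _
  · rw [max_eq_left h]
    refine (min_le_left _ _).trans ?_
    simp

lemma ksz_complex {m n : ℕ} (hm : 0 < m) (hn : 0 < n) (ε : (Fin m → Fin n) → ℝ)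
    (hε : ∀ j, ε j = 1 ∨ ε j = -1)
    {C : ℝ} (hC : 1 ≤ C)
    (h2 : ∀ x : Fin m → Fin n → ℂ, (∀ k, ∑ j, ‖x k j‖ ^ 2 ≤ 1) →
        ‖∑ j, (ε j : ℂ) * ∏ k, x k (j k)‖ ≤ C * √n)
    (p : Fin m → ℝ≥0∞) (hp : ∀ k, 1 ≤ p k) (x : Fin m → Fin n → ℂ)
    (hx : ∀ k, lpNorm (p k) (x k) ≤ 1) :
    ‖∑ j, (ε j : ℂ) * ∏ k, x k (j k)‖ ≤ C * (n : ℝ) ^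
              ((1 / ⨅ k, max 2 (conjExp (p k))).toReal
                + ∑ k, max ((1 : ℝ) / 2 - (1 / p k).toReal) 0) := by
  have hn' : (0:ℝ) < n := by exact_mod_cast hn
  have hn1 : (1:ℝ) ≤ n := by exact_mod_cast hn
  have : Nonempty (Fin m) := ⟨⟨0, hm⟩⟩
  obtain ⟨k0, hk0⟩ := Finite.exists_max p
  have hE := ksz_exp p hp k0
  rcases le_total 2 (p k0) with h | h
  · have hinv : (1 / p k0).toReal ≤ 1 / 2 := by
      have : 1 / p k0 ≤ 1 / 2 := by
        rw [one_div, one_div]; exact ENNReal.inv_le_inv.2 h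
      simpa using ENNReal.toReal_mono (by simp) this
    rw [min_eq_left (by linarith)] at hE
    set t : Fin m → ℝ := fun k => (n:ℝ) ^ (max ((1 : ℝ) / 2 - (1 / p k).toReal) 0) with ht
    have ht0 : ∀ k, 0 < t k := fun k => Real.rpow_pos_of_pos hn' _
    have hb := h2 (fun k j => (t k : ℂ)⁻¹ * x k j) (by
      intro k
      have := ksz_l2_of_lp hn (hp k) (x k) (hx k)
      simp only [norm_mul, norm_inv, Complex.norm_real, mul_pow, ← Finset.mul_sum]
      rw [Real.norm_of_nonneg (ht0 k).le, inv_pow, inv_mul_le_iff₀ (pow_pos (ht0 k) 2), mul_one]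
      exact this)
    have e : ∑ j, (ε j : ℂ) * ∏ k, x k (j k) =
        ((∏ k, t k : ℝ) : ℂ) * ∑ j, (ε j : ℂ) * ∏ k, ((t k : ℂ)⁻¹ * x k (j k)) := by
      rw [Finset.mul_sum]
      refine Finset.sum_congr rfl fun j _ => ?_
      rw [Finset.prod_mul_distrib]
      have : ((∏ k, t k : ℝ) : ℂ) * ∏ k, (t k : ℂ)⁻¹ = 1 := by
        push_cast
        rw [← Finset.prod_mul_distrib]
        refine Finset.prod_eq_one fun k _ => mul_inv_cancel₀ ?_
        exact_mod_cast (ht0 k).ne'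
      linear_combination (-(ε j : ℂ) * ∏ k, x k (j k)) * this
    have hprod : 0 < ∏ k, t k := Finset.prod_pos fun k _ => ht0 k
    rw [e, norm_mul, Complex.norm_real, Real.norm_of_nonneg hprod.le, Real.rpow_add hn',
      Real.rpow_sum_of_pos hn']
    calc (∏ k, t k) * _ ≤ (∏ k, t k) * (C * √n) := by gcongr
      _ = C * (√n * ∏ k, t k) := by ring
      _ ≤ _ := by
        rw [Real.sqrt_eq_rpow]
        gcongr
  · have hfin : ∀ k, p k ≠ ∞ := fun k => ne_top_of_le_ne_top (by norm_num) ((hk0 k).trans h)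
    have hP1 : ∀ k, 1 ≤ (p k).toReal := by
      intro k
      rw [← ENNReal.toReal_one]; exact ENNReal.toReal_mono (hfin k) (hp k)
    have hP2 : (p k0).toReal ≤ 2 := by
      simpa using ENNReal.toReal_mono (by norm_num) h
    have := ksz_interp ε hε hC h2 (hP1 k0) hP2 x (by
      intro k
      refine le_trans (Finset.sum_le_sum fun j _ => ?_) (lpNorm_le_one (hp k) (hfin k) (hx k))
      have hle : (p k).toReal ≤ (p k0).toReal := ENNReal.toReal_mono (hfin k0) (hk0 k)
      have h1k := hP1 k
      rcases eq_or_lt_of_le (norm_nonneg (x k j)) with h0 | h0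
      · rw [← h0, Real.zero_rpow (by linarith), Real.zero_rpow (by linarith)]
      · exact Real.rpow_le_rpow_of_exponent_ge h0 (lpNorm_coord (hp k) (hx k) j) hle)
    refine this.trans ?_
    gcongr
    have e : (1 / p k0).toReal = 1 / (p k0).toReal := by simp
    have h3 : 1 / 2 ≤ 1 / (p k0).toReal :=
      one_div_le_one_div_of_le (by linarith [hP1 k0]) hP2
    rw [e, min_eq_right (by linarith)] at hE
    have h4 : 0 ≤ ∑ k, max ((1 : ℝ) / 2 - (1 / p k).toReal) 0 :=
      Finset.sum_nonneg fun _ _ => le_max_right _ _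
    linarith

/-- **Kahane–Salem–Zygmund inequality, optimal exponent (Theorem 1).**
For positive integers `m, n` and `p_1, …, p_m ∈ [1,∞]` there are a constant `C > 0`
depending only on `m` and signs `ε_j ∈ {−1,1}` such that the `m`-linear form
`A z = ∑_j ε_j z^{(1)}_{j 1} ⋯ z^{(m)}_{j m}` satisfies
`‖A‖ ≤ C · n ^ (1/ρ + ∑ k max (1/2 − 1/p_k) 0)`, with `ρ = min_k max 2 (p_k)*`. -/
theorem ksz_optimal_upper_bound {𝕂 : Type*} [RCLike 𝕂] (m : ℕ) (hm : 0 < m) :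
    ∃ C : ℝ, 0 < C ∧
      ∀ n : ℕ, 0 < n → ∀ p : Fin m → ℝ≥0∞, (∀ k, 1 ≤ p k) →
        ∃ ε : (Fin m → Fin n) → 𝕂, (∀ j, ε j = 1 ∨ ε j = -1) ∧
          opNorm p (coeffForm (𝕂 := 𝕂) (n := fun _ => n) ε) ≤
            C * (n : ℝ) ^
              ((1 / ⨅ k, max 2 (conjExp (p k))).toReal
                + ∑ k, max ((1 : ℝ) / 2 - (1 / p k).toReal) 0) := by
  obtain ⟨C, hC, H⟩ := ksz_l2 m hm
  refine ⟨2 ^ m * C, by positivity, ?_⟩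
  intro n hn p hp
  obtain ⟨ε, hε, h2⟩ := H n hn
  refine ⟨fun j => (ε j : 𝕂), fun j => ?_, ?_⟩
  · rcases hε j with h | h <;> simp [h]
  set R : ℝ := (n : ℝ) ^ ((1 / ⨅ k, max 2 (conjExp (p k))).toReal
                + ∑ k, max ((1 : ℝ) / 2 - (1 / p k).toReal) 0) with hR
  have hR0 : 0 ≤ R := by positivity
  have main := ksz_multi (E := Fin n → 𝕂)
    (coeffForm (𝕂 := 𝕂) (n := fun _ => n) (fun j => (ε j : 𝕂)))
    (fun k => {x | ∃ y : Fin n → ℝ, lpNorm (p k) y ≤ 1 ∧ x = fun j => (y j : 𝕂)})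
    (fun k => {x | lpNorm (p k) x ≤ 1}) 2 (C * R) (by
      intro k φ K hK x hx
      have hx' : lpNorm (p k) x ≤ 1 := hx
      refine (ksz_reim φ x).trans ?_
      have a1 := hK _ ⟨fun j => RCLike.re (x j),
        (lpNorm_mono fun j => by simpa using RCLike.abs_re_le_norm (x j)).trans hx', rfl⟩
      have a2 := hK _ ⟨fun j => RCLike.im (x j),
        (lpNorm_mono fun j => by simpa using RCLike.abs_im_le_norm (x j)).trans hx', rfl⟩
      refine (add_le_add a1 a2).trans (le_of_eq (by ring))) (by
      intro z hz
      choose y hy hzy using hz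
      have hc := ksz_complex hm hn ε hε hC h2 p hp (fun k j => (y k j : ℂ)) (by
        intro k
        exact (lpNorm_mono fun j => by simp).trans (hy k))
      have e1 : ∑ j, (ε j : ℂ) * ∏ k, (y k (j k) : ℂ) = ((∑ j, ε j * ∏ k, y k (j k) : ℝ) : ℂ) := by
        push_cast; rfl
      have e2 : ∑ j, (ε j : 𝕂) * ∏ k, z k (j k) = ((∑ j, ε j * ∏ k, y k (j k) : ℝ) : 𝕂) := by
        push_cast
        refine Finset.sum_congr rfl fun j _ => ?_
        congr 1
        refine Finset.prod_congr rfl fun k _ => ?_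
        rw [hzy k]
      rw [e1, Complex.norm_real] at hc
      rw [coeffForm_apply', e2, RCLike.norm_ofReal, ← Real.norm_eq_abs]
      exact hc)
  unfold opNorm
  refine Real.sSup_le ?_ (by positivity)
  rintro t ⟨x, hx, rfl⟩
  have := main x hx
  rw [mul_assoc]
  exact this
end
end

section
/- Let m be a positive integer. There exists a constant D_m > 0 depending only on m such that for all n ≥ 1, all p_1, ..., p_m ∈ [1, ∞], and every unimodular m-linear form A : ℓ_{p_1}^n × ⋯ × ℓ_{p_m}^n → 𝕂 (i.e., every m-linear form all of whose coefficients A(e_{j_1},...,e_{j_m}) have modulus 1), one has ‖A‖ ≥ D_m · n^{1/ρ + Σ_{k=1}^m max{1/2 − 1/p_k, 0}}, where ρ := min_{1≤k≤m} max{2, p_k*} and p_k* is the conjugate exponent of p_k. In other words, the exponent 1/ρ + Σ_{k=1}^m max{1/2 − 1/p_k, 0} in the Kahane–Salem–Zygmund-type upper bound is optimal. -/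
open scoped BigOperators ENNReal

noncomputable section

lemma ksz_avg {𝕂 E : Type*} [RCLike 𝕂] [NormedAddCommGroup E] [InnerProductSpace 𝕂 E]
    (w v : E) (l μ r : ℝ) (hμ : 0 ≤ μ) :
    2 * (l * (‖w‖ ^ 2 + (‖v‖ ^ 2 + r)) - μ * (‖w‖ ^ 4 + 6 * ‖w‖ ^ 2 * (‖v‖ ^ 2 + r) + 3 * (‖v‖ ^ 2 + r) ^ 2))
    ≤ (l * (‖w + v‖ ^ 2 + r) - μ * (‖w + v‖ ^ 4 + 6 * ‖w + v‖ ^ 2 * r + 3 * r ^ 2))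
     + (l * (‖w - v‖ ^ 2 + r) - μ * (‖w - v‖ ^ 4 + 6 * ‖w - v‖ ^ 2 * r + 3 * r ^ 2)) := by
  have h1 := @norm_add_sq 𝕂 E _ _ _ w v
  have h2 := @norm_sub_sq 𝕂 E _ _ _ w v
  have h3 : |RCLike.re (inner 𝕂 w v)| ≤ ‖w‖ * ‖v‖ :=
    (RCLike.abs_re_le_norm _).trans (norm_inner_le_norm w v)
  set c := RCLike.re (inner 𝕂 w v)
  have h4 : c ^ 2 ≤ ‖w‖ ^ 2 * ‖v‖ ^ 2 := by
    rw [← mul_pow, ← sq_abs c]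
    gcongr
  have e1 : ‖w + v‖ ^ 4 = (‖w‖ ^ 2 + 2 * c + ‖v‖ ^ 2) ^ 2 := by rw [← h1]; ring
  have e2 : ‖w - v‖ ^ 4 = (‖w‖ ^ 2 - 2 * c + ‖v‖ ^ 2) ^ 2 := by rw [← h2]; ring
  rw [e1, e2, h1, h2]
  have h5 : 0 ≤ μ * (8 * (‖w‖ ^ 2 * ‖v‖ ^ 2 - c ^ 2) + 4 * (‖v‖ ^ 2) ^ 2) :=
    mul_nonneg hμ (by nlinarith [sq_nonneg (‖v‖ ^ 2)])
  nlinarith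

lemma ksz_ind {𝕂 E T ι : Type*} [RCLike 𝕂] [NormedAddCommGroup E] [InnerProductSpace 𝕂 E]
    [Fintype T] [DecidableEq ι] (v : T → ι → E) (l μ : T → ℝ) (hμ : ∀ t, 0 ≤ μ t) (s : Finset ι) :
    ∀ w : T → E, ∃ ε : ι → 𝕂, (∀ i, ‖ε i‖ = 1) ∧
      ∑ t, (l t * (‖w t‖ ^ 2 + ∑ i ∈ s, ‖v t i‖ ^ 2) - μ t * (‖w t‖ ^ 4
        + 6 * ‖w t‖ ^ 2 * (∑ i ∈ s, ‖v t i‖ ^ 2) + 3 * (∑ i ∈ s, ‖v t i‖ ^ 2) ^ 2)) ≤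
      ∑ t, (l t * ‖w t + ∑ i ∈ s, ε i • v t i‖ ^ 2 - μ t * ‖w t + ∑ i ∈ s, ε i • v t i‖ ^ 4) := by
  induction s using Finset.induction_on with
  | empty => intro w; exact ⟨fun _ => 1, by simp, by simp⟩
  | insert a s ha ih =>
    intro w
    have key : ∃ δ : 𝕂, ‖δ‖ = 1 ∧
        ∑ t, (l t * (‖w t‖ ^ 2 + ∑ i ∈ insert a s, ‖v t i‖ ^ 2) - μ t * (‖w t‖ ^ 4
        + 6 * ‖w t‖ ^ 2 * (∑ i ∈ insert a s, ‖v t i‖ ^ 2) + 3 * (∑ i ∈ insert a s, ‖v t i‖ ^ 2) ^ 2)) ≤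
        ∑ t, (l t * (‖w t + δ • v t a‖ ^ 2 + ∑ i ∈ s, ‖v t i‖ ^ 2) - μ t * (‖w t + δ • v t a‖ ^ 4
        + 6 * ‖w t + δ • v t a‖ ^ 2 * (∑ i ∈ s, ‖v t i‖ ^ 2) + 3 * (∑ i ∈ s, ‖v t i‖ ^ 2) ^ 2)) := by
      have h := Finset.sum_le_sum (s := Finset.univ) fun t (_ : t ∈ Finset.univ) =>
        ksz_avg (𝕂 := 𝕂) (w t) (v t a) (l t) (μ t) (∑ i ∈ s, ‖v t i‖ ^ 2) (hμ t)
      rw [← Finset.mul_sum, Finset.sum_add_distrib] at h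
      simp only [Finset.sum_insert ha]
      by_contra! hc
      have c1 := hc 1 (by simp)
      have c2 := hc (-1) (by simp)
      simp only [one_smul, neg_smul, ← sub_eq_add_neg] at c1 c2
      linarith
    obtain ⟨δ, hδ, hk⟩ := key
    obtain ⟨ε, hε, h2⟩ := ih (fun t => w t + δ • v t a)
    refine ⟨Function.update ε a δ, ?_, hk.trans (h2.trans (le_of_eq ?_))⟩
    · intro i
      by_cases h : i = a
      · subst h; simpa using hδ
      · simpa [Function.update_of_ne h] using hε i
    · refine Finset.sum_congr rfl fun t _ => ?_
      have : w t + ∑ i ∈ insert a s, Function.update ε a δ i • v t i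
          = w t + δ • v t a + ∑ i ∈ s, ε i • v t i := by
        rw [Finset.sum_insert ha, add_assoc]
        congr 2
        · simp
        · refine Finset.sum_congr rfl fun i hi => ?_
          rw [Function.update_of_ne]
          rintro rfl; exact ha hi
      rw [this]

lemma ksz_khinchine {𝕂 E T ι : Type*} [RCLike 𝕂] [NormedAddCommGroup E] [InnerProductSpace 𝕂 E]
    [Fintype T] [Fintype ι] (v : T → ι → E) :
    ∃ ε : ι → 𝕂, (∀ i, ‖ε i‖ = 1) ∧
      (1 / 2) * ∑ t, √(∑ i, ‖v t i‖ ^ 2) ≤ ∑ t, ‖∑ i, ε i • v t i‖ := by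
  classical
  let σ : T → ℝ := fun t => √(∑ i, ‖v t i‖ ^ 2)
  have hσ0 : ∀ t, 0 ≤ σ t := fun t => Real.sqrt_nonneg _
  have hσ : ∀ t, ∑ i, ‖v t i‖ ^ 2 = σ t ^ 2 := fun t =>
    (Real.sq_sqrt (Finset.sum_nonneg fun i _ => by positivity)).symm
  let κ : T → ℝ := fun t => (2 * σ t)⁻¹
  have hκ : ∀ t, 0 ≤ κ t := fun t => inv_nonneg.2 (by linarith [hσ0 t])
  obtain ⟨ε, hε, h⟩ := ksz_ind (𝕂 := 𝕂) v (fun t => 3 / 2 * κ t) (fun t => κ t ^ 3 / 2)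
    (fun t => by have := hκ t; positivity) Finset.univ (fun _ => 0)
  refine ⟨ε, hε, ?_⟩
  rw [Finset.mul_sum]
  refine le_trans (Finset.sum_le_sum fun t _ => ?_) (h.trans (Finset.sum_le_sum fun t _ => ?_))
  · change 1 / 2 * σ t ≤ _
    rw [hσ]
    by_cases h0 : σ t = 0
    · simp [h0]
    · have e : κ t * σ t = 1 / 2 := by simp only [κ]; field_simp
      have e2 : 3 / 2 * κ t * σ t ^ 2 = 3 / 4 * σ t := by linear_combination (3 / 2 * σ t) * e
      have e3 : κ t ^ 3 * σ t ^ 4 = σ t / 8 := by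
        have : κ t ^ 3 * σ t ^ 4 = (κ t * σ t) ^ 3 * σ t := by ring
        rw [this, e]; ring
      simp only [norm_zero]
      nlinarith [hσ0 t]
  · simp only [zero_add]
    set X := ‖∑ i, ε i • v t i‖
    have hX : 0 ≤ X := norm_nonneg _
    by_cases h0 : κ t = 0
    · simp [h0, hX]
    have hp : 0 < κ t := lt_of_le_of_ne (hκ t) (Ne.symm h0)
    have hy : 0 ≤ κ t * X := by positivity
    have : 0 ≤ (κ t * X - 1) ^ 2 * (κ t * X + 2) := by positivity
    nlinarith [mul_nonneg hX this]

def kszSel {𝕂 : Type*} [RCLike 𝕂] {m n : ℕ} (k₀ : Fin m) (x : Fin m → Fin n → 𝕂)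
    (U : Finset (Fin m)) (i : Fin n) (j : Fin m → Fin n) : Fin m → Fin n → 𝕂 :=
  fun k => if k = k₀ then Pi.single i 1 else if k ∈ U then Pi.single (j k) 1 else x k

lemma ksz_sum_update {m n : ℕ} (u : Fin m) (F : (Fin m → Fin n) → ℝ) :
    ∑ a, ∑ j : Fin m → Fin n, F (Function.update j u a) = n * ∑ j, F j := by
  rw [← Fintype.sum_prod_type' (f := fun a j => F (Function.update j u a))]
  have hinv : Function.Involutive (fun q : Fin n × (Fin m → Fin n) =>
      (q.2 u, Function.update q.2 u q.1)) := by
    rintro ⟨a, j⟩; simp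
  rw [Fintype.sum_equiv hinv.toPerm (fun q : Fin n × (Fin m → Fin n) =>
    F (Function.update q.2 u q.1)) (fun q => F q.2) (fun q => rfl)]
  rw [Fintype.sum_prod_type]
  simp

lemma ksz_expand {𝕂 : Type*} [RCLike 𝕂] {m n : ℕ}
    (A : MultilinearMap 𝕂 (fun _ : Fin m => Fin n → 𝕂) 𝕂) (z : Fin m → Fin n → 𝕂) (u : Fin m)
    (ε : Fin n → 𝕂) :
    A (Function.update z u ε) = ∑ a, ε a * A (Function.update z u (Pi.single a 1)) := by
  have : ε = ∑ a, ε a • (Pi.single a 1 : Fin n → 𝕂) := by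
    ext b; simp [Finset.sum_apply, Pi.single_apply]
  conv_lhs => rw [this]
  rw [MultilinearMap.map_update_sum]
  simp

lemma ksz_iter {𝕂 : Type*} [RCLike 𝕂] {m n : ℕ}
    (A : MultilinearMap 𝕂 (fun _ : Fin m => Fin n → 𝕂) 𝕂) (k₀ : Fin m) (U : Finset (Fin m)) :
    k₀ ∉ U → ∀ x : Fin m → Fin n → 𝕂, ∃ y : Fin m → Fin n → 𝕂, (∀ k ∉ U, y k = x k) ∧
      (∀ k ∈ U, ∀ i, ‖y k i‖ = 1) ∧
      (√n / 2) ^ U.card * ∑ i, √(∑ j, ‖A (kszSel k₀ x U i j)‖ ^ 2) ≤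
        ∑ i, √(∑ j, ‖A (kszSel k₀ y ∅ i j)‖ ^ 2) := by
  induction U using Finset.induction_on with
  | empty => intro _ x; exact ⟨x, by simp, by simp, by simp⟩
  | insert u U hu ih =>
    intro hk x
    have hk0 : k₀ ≠ u := by rintro rfl; simp at hk
    have hkU : k₀ ∉ U := fun h => hk (Finset.mem_insert_of_mem h)
    let v : Fin n → Fin n → EuclideanSpace 𝕂 (Fin m → Fin n) := fun i a =>
      WithLp.toLp 2 fun j => A (Function.update (kszSel k₀ x U i j) u (Pi.single a 1))
    obtain ⟨ε, hε, h⟩ := ksz_khinchine (𝕂 := 𝕂) v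
    obtain ⟨y, hy1, hy2, hy3⟩ := ih hkU (Function.update x u ε)
    refine ⟨y, ?_, ?_, le_trans ?_ hy3⟩
    · intro k hkk
      rw [Finset.mem_insert, not_or] at hkk
      rw [hy1 k hkk.2, Function.update_of_ne hkk.1]
    · intro k hkk i
      by_cases hku : k ∈ U
      · exact hy2 k hku i
      · have : k = u := by simpa [hku] using hkk
        subst this
        rw [hy1 k hku]; simpa using hε i
    · have s1 : ∀ i a j, Function.update (kszSel k₀ x U i j) u (Pi.single a 1)
          = kszSel k₀ x (insert u U) i (Function.update j u a) := by
        intro i a j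
        ext1 k
        by_cases hku : k = u
        · subst hku; simp [kszSel, hk0.symm]
        · simp [kszSel, hku]
      have s2 : ∀ i j, Function.update (kszSel k₀ x U i j) u ε
          = kszSel k₀ (Function.update x u ε) U i j := by
        intro i j
        ext1 k
        by_cases hku : k = u
        · subst hku; simp [kszSel, hk0.symm, hu]
        · simp [kszSel, hku]
      have e1 : ∀ i, √(∑ a, ‖v i a‖ ^ 2)
          = √n * √(∑ j, ‖A (kszSel k₀ x (insert u U) i j)‖ ^ 2) := by
        intro i
        rw [← Real.sqrt_mul (by positivity)]
        congr 1
        rw [← ksz_sum_update u (fun j => ‖A (kszSel k₀ x (insert u U) i j)‖ ^ 2)]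
        refine Finset.sum_congr rfl fun a _ => ?_
        rw [EuclideanSpace.norm_sq_eq]
        simp only [v, s1]
      have e2 : ∀ i, ‖∑ a, ε a • v i a‖
          = √(∑ j, ‖A (kszSel k₀ (Function.update x u ε) U i j)‖ ^ 2) := by
        intro i
        rw [EuclideanSpace.norm_eq]
        congr 1
        refine Finset.sum_congr rfl fun j _ => ?_
        rw [← s2, ksz_expand]
        simp [v]
      simp only [e1, e2, ← Finset.mul_sum] at h
      rw [Finset.card_insert_of_notMem hu, pow_succ, mul_assoc]
      refine mul_le_mul_of_nonneg_left ?_ (by positivity)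
      linarith

lemma ksz_lp_flat {𝕂 : Type*} [RCLike 𝕂] {n : ℕ} (hn : 1 ≤ n) (p : ℝ≥0∞) (hp : 1 ≤ p)
    (x : Fin n → 𝕂) (hx : ∀ i, ‖x i‖ ≤ (n : ℝ) ^ (-(1 / p).toReal)) : lpNorm p x ≤ 1 := by
  unfold lpNorm
  split_ifs with h
  · subst h
    refine Real.iSup_le (fun i => (hx i).trans (by simp)) zero_le_one
  · have hp0 : 0 < p.toReal := ENNReal.toReal_pos (by rintro rfl; simp at hp) h
    have hn0 : (0 : ℝ) < n := by exact_mod_cast hn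
    refine Real.rpow_le_one (Finset.sum_nonneg fun i _ => by positivity) ?_ (by positivity)
    have : ∀ i ∈ Finset.univ, ‖x i‖ ^ p.toReal ≤ (n : ℝ)⁻¹ := by
      intro i _
      refine (Real.rpow_le_rpow (norm_nonneg _) (hx i) hp0.le).trans (le_of_eq ?_)
      rw [← Real.rpow_mul hn0.le, ← Real.rpow_neg_one]
      congr 1
      simp
      field_simp
    refine (Finset.sum_le_sum this).trans (le_of_eq ?_)
    simp
    field_simp

lemma ksz_lp_single {𝕂 : Type*} [RCLike 𝕂] {n : ℕ} (p : ℝ≥0∞) (hp : 1 ≤ p)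
    (i : Fin n) : lpNorm p (Pi.single i 1 : Fin n → 𝕂) ≤ 1 := by
  have hb : ∀ j, ‖(Pi.single i 1 : Fin n → 𝕂) j‖ = if j = i then 1 else 0 := by
    intro j; rw [Pi.single_apply]; split_ifs <;> simp
  unfold lpNorm
  split_ifs with h
  · refine Real.iSup_le (fun j => ?_) zero_le_one
    rw [hb]; split_ifs <;> simp
  · have hp0 : 0 < p.toReal := ENNReal.toReal_pos (by rintro rfl; simp at hp) h
    simp only [hb]
    have : ∀ j : Fin n, (if j = i then (1:ℝ) else 0) ^ p.toReal = if j = i then 1 else 0 := by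
      intro j; split_ifs
      · simp
      · exact Real.zero_rpow hp0.ne'
    simp [this]

lemma ksz_lp_coord {𝕂 : Type*} [RCLike 𝕂] {n : ℕ} (p : ℝ≥0∞) (hp : 1 ≤ p)
    (x : Fin n → 𝕂) (hx : lpNorm p x ≤ 1) (i : Fin n) : ‖x i‖ ≤ 1 := by
  unfold lpNorm at hx
  split_ifs at hx with h
  · exact (le_ciSup (f := fun j => ‖x j‖) (Set.finite_range _).bddAbove i).trans hx
  · have hp0 : 0 < p.toReal := ENNReal.toReal_pos (by rintro rfl; simp at hp) h
    have hs : 0 ≤ ∑ j, ‖x j‖ ^ p.toReal := Finset.sum_nonneg fun i _ => by positivity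
    by_contra! hc
    have h1 : 1 < ‖x i‖ ^ p.toReal := Real.one_lt_rpow hc hp0
    have h2 : ‖x i‖ ^ p.toReal ≤ ∑ j, ‖x j‖ ^ p.toReal :=
      Finset.single_le_sum (f := fun j => ‖x j‖ ^ p.toReal) (fun j _ => by positivity)
        (Finset.mem_univ i)
    have := Real.one_lt_rpow (h1.trans_le h2) (one_div_pos.2 hp0)
    linarith

lemma ksz_le_opNorm {𝕂 : Type*} [RCLike 𝕂] {m n : ℕ} (p : Fin m → ℝ≥0∞) (hp : ∀ k, 1 ≤ p k)
    (A : MultilinearMap 𝕂 (fun _ : Fin m => Fin n → 𝕂) 𝕂) (x : Fin m → Fin n → 𝕂)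
    (hx : ∀ k, lpNorm (p k) (x k) ≤ 1) : ‖A x‖ ≤ opNorm (n := fun _ => n) p A := by
  refine le_csSup ⟨∑ r : Fin m → Fin n, ‖A fun k => Pi.single (r k) 1‖, ?_⟩ ⟨x, hx, rfl⟩
  rintro t ⟨y, hy, rfl⟩
  have e : y = fun k => ∑ a, y k a • (Pi.single a 1 : Fin n → 𝕂) := by
    ext k b; simp [Finset.sum_apply, Pi.single_apply]
  rw [e, MultilinearMap.map_sum]
  refine (norm_sum_le _ _).trans (Finset.sum_le_sum fun r _ => ?_)
  rw [MultilinearMap.map_smul_univ, norm_smul, norm_prod]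
  have : ∏ k, ‖y k (r k)‖ ≤ 1 := Finset.prod_le_one (fun k _ => norm_nonneg _) fun k _ =>
    ksz_lp_coord (p k) (hp k) (y k) (hy k) (r k)
  exact mul_le_of_le_one_left (norm_nonneg _) this

lemma ksz_rho {m : ℕ} (p : Fin m → ℝ≥0∞) (hp : ∀ k, 1 ≤ p k) (k₀ : Fin m)
    (hmax : ∀ k, p k ≤ p k₀) :
    (1 / ⨅ k, max 2 (conjExp (p k))).toReal ≤ min (1 / 2) (1 - (1 / p k₀).toReal) := by
  have h1 : max 2 (conjExp (p k₀)) ≤ ⨅ k, max 2 (conjExp (p k)) := by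
    refine le_iInf fun k => max_le_max le_rfl ?_
    unfold conjExp
    simp only [one_div]
    exact ENNReal.inv_le_inv.2 (tsub_le_tsub_left (ENNReal.inv_le_inv.2 (hmax k)) _)
  have hle : (1 : ℝ≥0∞) / p k₀ ≤ 1 := by
    rw [one_div]; exact ENNReal.inv_le_one.2 (hp k₀)
  refine le_min ?_ ?_
  · have h2 : (1 / ⨅ k, max 2 (conjExp (p k))) ≤ 2⁻¹ := by
      rw [one_div]; exact ENNReal.inv_le_inv.2 ((le_max_left _ _).trans h1)
    have := ENNReal.toReal_mono (by simp) h2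
    simpa using this
  · have h2 : (1 / ⨅ k, max 2 (conjExp (p k))) ≤ 1 - 1 / p k₀ := by
      rw [one_div, ENNReal.inv_le_iff_inv_le]
      exact (le_max_right _ _).trans h1
    have := ENNReal.toReal_mono (by simp) h2
    rwa [ENNReal.toReal_sub_of_le hle (by simp)] at this

/-- **Optimality of the exponent in the Kahane–Salem–Zygmund inequality (Theorem 1).**
For each `m` there is `D_m > 0` such that for all `n ≥ 1`, all `p_1, …, p_m ∈ [1,∞]` and
every unimodular `m`-linear form `A : ℓ_{p_1}^n × ⋯ × ℓ_{p_m}^n → 𝕂` one has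
`‖A‖ ≥ D_m · n ^ (1/ρ + ∑ k max (1/2 − 1/p_k) 0)`, with `ρ = min_k max 2 (p_k)*`. -/
theorem ksz_exponent_optimal {𝕂 : Type*} [RCLike 𝕂] (m : ℕ) (hm : 0 < m) :
    ∃ D : ℝ, 0 < D ∧
      ∀ n : ℕ, 1 ≤ n → ∀ p : Fin m → ℝ≥0∞, (∀ k, 1 ≤ p k) →
        ∀ A : MultilinearMap 𝕂 (fun _ : Fin m => Fin n → 𝕂) 𝕂,
          Unimodular (n := fun _ => n) A →
            D * (n : ℝ) ^
                ((1 / ⨅ k, max 2 (conjExp (p k))).toReal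
                  + ∑ k, max ((1 : ℝ) / 2 - (1 / p k).toReal) 0) ≤
              opNorm p A := by
  classical
  refine ⟨(1 / 2) ^ m, by positivity, ?_⟩
  intro n hn p hp A hA
  have hn0 : (0 : ℝ) < n := by exact_mod_cast hn
  have hn1 : (1 : ℝ) ≤ n := by exact_mod_cast hn
  have : Nonempty (Fin m) := ⟨⟨0, hm⟩⟩
  obtain ⟨k₀, hmax⟩ := Finite.exists_max p
  have hrho := ksz_rho p hp k₀ hmax
  set ρ' := (1 / ⨅ k, max 2 (conjExp (p k))).toReal
  let q : Fin m → ℝ := fun k => (1 / p k).toReal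
  let S : Finset (Fin m) := (Finset.univ.erase k₀).filter fun k => q k < 1 / 2
  have hkS : k₀ ∉ S := by simp [S]
  let i₀ : Fin n := ⟨0, hn⟩
  obtain ⟨y, hy1, hy2, hy3⟩ := ksz_iter A k₀ S hkS (fun _ => Pi.single i₀ 1)
  have hcard : Fintype.card (Fin m → Fin n) = n ^ m := by simp
  -- the initial value
  have hinit : ∀ i j, ‖A (kszSel k₀ (fun _ => Pi.single i₀ 1) S i j)‖ = 1 := by
    intro i j
    have := hA (fun k => if k = k₀ then i else if k ∈ S then j k else i₀)
    rw [← this]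
    congr 2
    ext1 k
    simp only [kszSel]
    split_ifs <;> rfl
  have hN : (0 : ℝ) < √((n : ℝ) ^ m) := by positivity
  have hfin : ∀ i j, kszSel k₀ y ∅ i j = Function.update y k₀ (Pi.single i 1) := by
    intro i j
    ext1 k
    by_cases h : k = k₀
    · subst h; simp [kszSel]
    · simp [kszSel, h]
  simp only [hinit, hfin] at hy3
  simp only [one_pow, Finset.sum_const, Finset.card_univ, hcard, nsmul_eq_mul, mul_one,
    Nat.cast_pow, Fintype.card_fin] at hy3
  have hs : ∀ i, √((n : ℝ) ^ m * ‖A (Function.update y k₀ (Pi.single i 1))‖ ^ 2)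
      = √((n : ℝ) ^ m) * ‖A (Function.update y k₀ (Pi.single i 1))‖ := by
    intro i
    rw [Real.sqrt_mul (by positivity), Real.sqrt_sq (norm_nonneg _)]
  simp only [hs, ← Finset.mul_sum] at hy3
  have hy4 : (√n / 2) ^ S.card * n ≤ ∑ i, ‖A (Function.update y k₀ (Pi.single i 1))‖ := by
    refine le_of_mul_le_mul_left ?_ hN
    linarith
  -- phases in the coordinate `k₀`
  have hph : ∀ z : 𝕂, ∃ w : 𝕂, ‖w‖ = 1 ∧ w * z = (‖z‖ : 𝕂) := by
    intro z
    by_cases hz : z = 0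
    · exact ⟨1, by simp, by simp [hz]⟩
    · have hz' : (‖z‖ : 𝕂) ≠ 0 := by simpa using hz
      refine ⟨(‖z‖ : 𝕂) / z, ?_, by field_simp⟩
      rw [norm_div, RCLike.norm_ofReal, abs_norm, div_self (by simpa using hz)]
  choose ph hph1 hph2 using hph
  let η : Fin n → 𝕂 := fun i => ph (A (Function.update y k₀ (Pi.single i 1)))
  let z : Fin m → Fin n → 𝕂 := Function.update y k₀ η
  have hAz : ‖A z‖ = ∑ i, ‖A (Function.update y k₀ (Pi.single i 1))‖ := by
    have : A z = ((∑ i, ‖A (Function.update y k₀ (Pi.single i 1))‖ : ℝ) : 𝕂) := by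
      simp only [z]
      rw [ksz_expand]
      simp only [η, hph2]
      push_cast; rfl
    rw [this, RCLike.norm_ofReal, abs_of_nonneg (Finset.sum_nonneg fun i _ => norm_nonneg _)]
  let c : Fin m → ℝ := fun k => if k ∈ insert k₀ S then (n : ℝ) ^ (-q k) else 1
  have hc : ∀ k, 0 ≤ c k := by
    intro k; simp only [c]; split_ifs <;> positivity
  have hx := ksz_le_opNorm p hp A (fun k => (c k : 𝕂) • z k) (by
    intro k
    by_cases h : k ∈ insert k₀ S
    · refine ksz_lp_flat hn (p k) (hp k) _ fun i => ?_
      have hz1 : ‖z k i‖ = 1 := by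
        by_cases h0 : k = k₀
        · subst h0; simp [z, η, hph1]
        · simp only [z, Function.update_of_ne h0]
          exact hy2 k (by simpa [h0] using h) i
      rw [Pi.smul_apply, norm_smul, hz1, mul_one, RCLike.norm_ofReal, abs_of_nonneg (hc k)]
      simp only [c, if_pos h, q]; exact le_rfl
    · have h0 : k ≠ k₀ := by rintro rfl; simp at h
      have hS : k ∉ S := fun hh => h (Finset.mem_insert_of_mem hh)
      simp only [c, if_neg h, z, Function.update_of_ne h0, hy1 k hS]
      simpa using ksz_lp_single (𝕂 := 𝕂) (p k) (hp k) i₀)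
  refine le_trans ?_ hx
  rw [MultilinearMap.map_smul_univ, norm_smul, hAz, norm_prod]
  have hprod : ∏ k, ‖(c k : 𝕂)‖ = (n : ℝ) ^ (-∑ k ∈ insert k₀ S, q k) := by
    have : ∀ k, ‖(c k : 𝕂)‖ = if k ∈ insert k₀ S then (n : ℝ) ^ (-q k) else 1 := by
      intro k; rw [RCLike.norm_ofReal, abs_of_nonneg (hc k)]
    simp only [this]
    rw [Finset.prod_ite_mem, Finset.univ_inter, ← Finset.sum_neg_distrib, Real.rpow_sum_of_pos hn0]
  rw [hprod]
  refine le_trans ?_ (mul_le_mul_of_nonneg_left hy4 (by positivity))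
  have hscard : S.card ≤ m := by simpa using S.card_le_univ
  have hpow : (√n / 2) ^ S.card * n = (1 / 2) ^ S.card * (n : ℝ) ^ ((S.card : ℝ) / 2 + 1) := by
    rw [Real.rpow_add hn0, Real.rpow_one, Real.sqrt_eq_rpow, div_pow, ← Real.rpow_mul_natCast hn0.le]
    rw [one_div_pow]
    rw [show (1 / 2 : ℝ) * S.card = S.card / 2 by ring]
    ring
  rw [hpow, mul_left_comm, ← Real.rpow_add hn0]
  refine mul_le_mul (pow_le_pow_of_le_one (by norm_num) (by norm_num) hscard)
    (Real.rpow_le_rpow_of_exponent_le hn1 ?_) (by positivity) (by positivity)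
  have hsum : ∑ k, max ((1 : ℝ) / 2 - (1 / p k).toReal) 0
      = max (1 / 2 - q k₀) 0 + ∑ k ∈ S, (1 / 2 - q k) := by
    rw [← Finset.add_sum_erase _ _ (Finset.mem_univ k₀)]
    congr 1
    rw [Finset.sum_filter]
    refine Finset.sum_congr rfl fun k _ => ?_
    change max (1 / 2 - q k) 0 = _
    split_ifs with h
    · exact max_eq_left (by linarith)
    · exact max_eq_right (by linarith)
  rw [hsum, Finset.sum_insert hkS, Finset.sum_sub_distrib]
  simp only [Finset.sum_const, nsmul_eq_mul]
  have hr1 := hrho.trans (min_le_left _ _)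
  have hr2 : ρ' ≤ 1 - q k₀ := hrho.trans (min_le_right _ _)
  rcases max_cases (1 / 2 - q k₀) 0 with ⟨h, _⟩ | ⟨h, _⟩ <;> rw [h] <;> linarith
end
end

section
/- Let m, n_1, ..., n_m be positive integers and p_1, ..., p_m ∈ [1, ∞]. There exists a constant C > 0 depending only on m such that there is a choice of signs ε_{j_1,...,j_m} ∈ {−1, 1} for which the m-linear form A : ℓ_{p_1}^{n_1} × ⋯ × ℓ_{p_m}^{n_m} → 𝕂 defined by A(z^{(1)}, ..., z^{(m)}) = Σ_{j_1=1}^{n_1} ⋯ Σ_{j_m=1}^{n_m} ε_{j_1,...,j_m} z_{j_1}^{(1)} ⋯ z_{j_m}^{(m)} satisfies ‖A‖ ≤ C · (Σ_{k=1}^m n_k)^{1 − 1/γ} · Π_{k=1}^m n_k^{max{1/γ − 1/p_k, 0}}, where γ := min{2, max{p_k : p_k ≤ 2}} (with γ := 2 if no p_k ≤ 2). -/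
open scoped BigOperators ENNReal

noncomputable section

def sgnB (b : Bool) : ℝ := if b then 1 else -1

lemma avg_exp {J : Type*} [Fintype J] [DecidableEq J] (a : J → ℝ) :
    ∑ e : J → Bool, Real.exp (∑ j, sgnB (e j) * a j)
      ≤ 2 ^ (Fintype.card J) * Real.exp ((∑ j, a j ^ 2) / 2) := by
  have h1 : ∀ e : J → Bool, Real.exp (∑ j, sgnB (e j) * a j)
      = ∏ j, Real.exp (sgnB (e j) * a j) := fun e => Real.exp_sum _ _
  simp_rw [h1]
  rw [← Fintype.prod_sum (fun j b => Real.exp (sgnB b * a j))]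
  have h2 : ∀ j, ∑ b : Bool, Real.exp (sgnB b * a j) = 2 * Real.cosh (a j) := by
    intro j
    simp [sgnB, Real.cosh_eq]
    ring
  simp_rw [h2]
  rw [Finset.prod_mul_distrib, Finset.prod_const, Finset.card_univ, Finset.sum_div, Real.exp_sum]
  gcongr with j
  exact Real.cosh_le_exp_half_sq _

lemma sum_half (Q : ℕ) : ∑ z ∈ Finset.Icc (-(Q:ℤ)) Q, (1/2:ℝ) ^ z.natAbs ≤ 3 := by
  have : ∑ z ∈ Finset.Icc (-(Q:ℤ)) Q, (1/2:ℝ) ^ z.natAbs = 3 - 2 * (1/2)^Q := by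
    induction Q with
    | zero => norm_num
    | succ q ih =>
      have : Finset.Icc (-((q+1:ℕ):ℤ)) ((q+1:ℕ):ℤ)
          = insert (-((q+1:ℕ):ℤ)) (insert (((q+1:ℕ):ℤ)) (Finset.Icc (-(q:ℤ)) q)) := by
        ext x; simp only [Finset.mem_Icc, Finset.mem_insert]; omega
      rw [this, Finset.sum_insert, Finset.sum_insert, ih]
      · rw [Int.natAbs_neg, Int.natAbs_natCast, pow_succ]; ring
      · simp only [Finset.mem_Icc]; omega
      · simp only [Finset.mem_Icc, Finset.mem_insert]; omega
  rw [this]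
  have : (0:ℝ) < (1/2)^Q := by positivity
  linarith

def netZ (K n : ℕ) : Finset (Fin n → ℤ) :=
  (Fintype.piFinset fun _ => Finset.Icc (-((K*n : ℕ):ℤ)) ((K*n:ℕ):ℤ)).filter
    fun z => ∑ i, (z i)^2 ≤ ((K*n : ℕ) : ℤ)

lemma mem_netZ {K n : ℕ} {z : Fin n → ℤ} (h : ∑ i, (z i)^2 ≤ ((K*n : ℕ) : ℤ)) :
    z ∈ netZ K n := by
  rw [netZ, Finset.mem_filter]
  refine ⟨?_, h⟩
  rw [Fintype.mem_piFinset]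
  intro i
  have h1 : (z i)^2 ≤ ((K*n : ℕ) : ℤ) :=
    (Finset.single_le_sum (f := fun i => (z i)^2) (fun i _ => sq_nonneg _) (Finset.mem_univ i)).trans h
  rw [Finset.mem_Icc]
  constructor
  · nlinarith [Int.le_self_sq (-(z i))]
  · nlinarith [Int.le_self_sq (z i)]

lemma card_netZ (K n : ℕ) : ((netZ K n).card : ℝ) ≤ (3 * 2 ^ K) ^ n := by
  have h1 : ((netZ K n).card : ℝ) * (1/2)^(K*n) ≤ 3 ^ n := by
    calc ((netZ K n).card : ℝ) * (1/2)^(K*n) = ∑ z ∈ netZ K n, (1/2:ℝ)^(K*n) := by simp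
      _ ≤ ∑ z ∈ netZ K n, ∏ i, (1/2:ℝ)^(z i).natAbs := by
        refine Finset.sum_le_sum fun z hz => ?_
        rw [Finset.prod_pow_eq_pow_sum]
        apply pow_le_pow_of_le_one (by norm_num) (by norm_num)
        have := (Finset.mem_filter.1 hz).2
        zify
        refine le_trans (Finset.sum_le_sum fun i _ => ?_) (by exact_mod_cast this)
        rw [← sq_abs]
        exact Int.le_self_sq _
      _ ≤ ∑ z ∈ (Fintype.piFinset fun _ : Fin n => Finset.Icc (-((K*n : ℕ):ℤ)) ((K*n:ℕ):ℤ)),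
            ∏ i, (1/2:ℝ)^(z i).natAbs := by
        apply Finset.sum_le_sum_of_subset_of_nonneg (Finset.filter_subset _ _)
        intros; positivity
      _ = ∏ i : Fin n, ∑ z ∈ Finset.Icc (-((K*n : ℕ):ℤ)) ((K*n:ℕ):ℤ), (1/2:ℝ)^z.natAbs := by
        rw [Finset.prod_univ_sum]
      _ ≤ ∏ i : Fin n, 3 := by
        refine Finset.prod_le_prod (fun i _ => ?_) fun i _ => sum_half _
        exact Finset.sum_nonneg fun i _ => by positivity
      _ = 3 ^ n := by simp
  have h2 : (0:ℝ) < 2^(K*n) := by positivity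
  calc ((netZ K n).card : ℝ) = ((netZ K n).card : ℝ) * (1/2)^(K*n) * 2^(K*n) := by
        rw [mul_assoc, ← mul_pow]; norm_num
    _ ≤ 3 ^ n * 2^(K*n) := by gcongr
    _ = _ := by rw [mul_pow, pow_mul]

lemma exists_trunc (t : ℝ) : ∃ z : ℤ, |(z:ℝ)| ≤ |t| ∧ |t - z| ≤ 1 := by
  rcases le_total 0 t with h | h
  · refine ⟨⌊t⌋, ?_, ?_⟩
    · rw [abs_of_nonneg h, abs_of_nonneg (by exact_mod_cast Int.floor_nonneg.2 h)]
      exact Int.floor_le t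
    · rw [abs_le]; constructor <;> linarith [Int.floor_le t, Int.lt_floor_add_one t]
  · refine ⟨⌈t⌉, ?_, ?_⟩
    · have : (⌈t⌉:ℝ) ≤ 0 := by exact_mod_cast Int.ceil_le.2 (by simpa using h)
      rw [abs_of_nonpos h, abs_of_nonpos this]
      linarith [Int.le_ceil t]
    · rw [abs_le]; constructor <;> linarith [Int.le_ceil t, Int.ceil_lt_add_one t]

/-- scaled lattice point -/
def scal (m : ℕ) {n : ℕ} (z : Fin n → ℤ) : Fin n → ℝ := fun i => (z i : ℝ) / (2 * m * √n)

lemma exists_net (m n : ℕ) (hm : 0 < m) (hn : 0 < n) (y : Fin n → ℝ) (hy : ∑ i, y i ^ 2 ≤ 1) :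
    ∃ z ∈ netZ (4 * m^2) n, ∑ i, (scal m z i)^2 ≤ 1 ∧
      ∑ i, (y i - scal m z i)^2 ≤ (1 / (2 * m))^2 := by
  choose z hz1 hz2 using fun i => exists_trunc (y i * (2 * m * √n))
  have hm' : (0:ℝ) < m := by exact_mod_cast hm
  have hn' : (0:ℝ) < n := by exact_mod_cast hn
  have hs : (0:ℝ) < √n := Real.sqrt_pos.2 hn'
  have hD : (0:ℝ) < 2 * m * √n := by positivity
  have hD2 : (2 * m * √n)^2 = 4 * m^2 * n := by
    rw [mul_pow, mul_pow, Real.sq_sqrt hn'.le]; ring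
  have hsq : ∀ i, (z i : ℝ)^2 ≤ y i ^ 2 * (4 * m^2 * n) := by
    intro i
    rw [← hD2, ← mul_pow]
    exact sq_le_sq.2 (hz1 i)
  have hsum : ∑ i, (z i : ℝ)^2 ≤ 4 * m^2 * n := by
    refine (Finset.sum_le_sum fun i _ => hsq i).trans ?_
    rw [← Finset.sum_mul]
    have : (0:ℝ) ≤ 4 * m^2 * n := by positivity
    nlinarith
  refine ⟨z, mem_netZ (by exact_mod_cast hsum), ?_, ?_⟩
  · simp only [scal, div_pow]
    rw [← Finset.sum_div, hD2, div_le_one (by positivity)]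
    exact hsum
  · have : ∀ i, (y i - scal m z i)^2 ≤ 1 / (4 * m^2 * n) := by
      intro i
      have e : y i - scal m z i = (y i * (2 * m * √n) - z i) / (2 * m * √n) := by
        rw [scal]; field_simp
      rw [e, div_pow, hD2]
      gcongr
      have := sq_le_sq.2 ((hz2 i).trans_eq (abs_one).symm)
      simpa using this
    refine (Finset.sum_le_sum fun i _ => this i).trans ?_
    rw [Finset.sum_const, Finset.card_univ, Fintype.card_fin, nsmul_eq_mul]
    apply le_of_eq
    field_simp; norm_num

lemma exists_good {m : ℕ} (hm : 0 < m) (n : Fin m → ℕ) (hn : ∀ k, 0 < n k) :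
    ∃ e : (∀ k, Fin (n k)) → Bool, ∀ z : ∀ k, Fin (n k) → ℤ,
      (∀ k, z k ∈ netZ (4 * m^2) (n k)) → (∀ k, ∑ i, (scal m (z k) i)^2 ≤ 1) →
      |∑ j : ∀ k, Fin (n k), sgnB (e j) * ∏ k, scal m (z k) (j k)|
        ≤ (Real.log (6 * 2^(4*m^2)) + 1/2) * √(∑ k, (n k : ℝ)) := by
  classical
  set N : ℕ := ∑ k, n k with hN
  have hN1 : 1 ≤ N := by
    have : n ⟨0, hm⟩ ≤ N := Finset.single_le_sum (f := n) (fun _ _ => Nat.zero_le _) (Finset.mem_univ _)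
    exact (hn _).trans_le this
  have hNr : (0:ℝ) < N := by exact_mod_cast hN1
  set L : ℝ := √N with hL
  have hLp : 0 < L := Real.sqrt_pos.2 hNr
  have hL2 : L^2 = N := Real.sq_sqrt hNr.le
  set T : Finset (∀ k, Fin (n k) → ℤ) := (Fintype.piFinset fun k => netZ (4*m^2) (n k)).filter
    (fun z => ∀ k, ∑ i, (scal m (z k) i)^2 ≤ 1) with hT
  let a : (∀ k, Fin (n k) → ℤ) → (∀ k, Fin (n k)) → ℝ := fun z j => ∏ k, scal m (z k) (j k)
  have hTc : (T.card : ℝ) ≤ (3 * 2^(4*m^2))^N := by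
    calc (T.card : ℝ) ≤ ((Fintype.piFinset fun k => netZ (4*m^2) (n k)).card : ℝ) := by
          exact_mod_cast Finset.card_filter_le _ _
      _ = ∏ k, ((netZ (4*m^2) (n k)).card : ℝ) := by rw [Fintype.card_piFinset]; push_cast; rfl
      _ ≤ ∏ k, (3 * 2^(4*m^2) : ℝ)^(n k) :=
          Finset.prod_le_prod (fun _ _ => by positivity) fun k _ => card_netZ _ _
      _ = _ := by rw [Finset.prod_pow_eq_pow_sum]
  have hsq : ∀ z ∈ T, ∑ j, (a z j)^2 ≤ 1 := by
    intro z hz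
    have hz := (Finset.mem_filter.1 hz).2
    calc ∑ j, (a z j)^2 = ∑ j : ∀ k, Fin (n k), ∏ k, (scal m (z k) (j k))^2 := by
          simp only [a, Finset.prod_pow]
      _ = ∏ k, ∑ i, (scal m (z k) i)^2 := by rw [Fintype.prod_sum]
      _ ≤ 1 := Finset.prod_le_one (fun k _ => Finset.sum_nonneg fun _ _ => sq_nonneg _) fun k _ => hz k
  let Φ : ((∀ k, Fin (n k)) → Bool) → ℝ := fun e => ∑ z ∈ T,
    (Real.exp (∑ j, sgnB (e j) * (L * a z j)) + Real.exp (∑ j, sgnB (e j) * (-L * a z j)))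
  let B : ℝ := (6 * 2^(4*m^2))^N * Real.exp (L^2/2)
  have hav : ∑ e, Φ e ≤ ∑ e : (∀ k, Fin (n k)) → Bool, B := by
    rw [Finset.sum_comm, Finset.sum_const, Finset.card_univ, Fintype.card_fun, Fintype.card_bool,
      nsmul_eq_mul]
    push_cast
    have h1 : ∀ z ∈ T, ∑ e : (∀ k, Fin (n k)) → Bool,
        (Real.exp (∑ j, sgnB (e j) * (L * a z j)) + Real.exp (∑ j, sgnB (e j) * (-L * a z j)))
        ≤ 2 * (2 ^ (Fintype.card (∀ k, Fin (n k))) * Real.exp (L^2/2)) := by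
      intro z hz
      rw [Finset.sum_add_distrib, two_mul]
      have hb : L^2 * ∑ j, (a z j)^2 ≤ L^2 := by
        have := hsq z hz
        nlinarith [sq_nonneg L]
      refine add_le_add ((avg_exp _).trans ?_) ((avg_exp _).trans ?_)
      · simp only [mul_pow]
        rw [← Finset.mul_sum]
        gcongr
      · simp only [mul_pow, neg_sq]
        rw [← Finset.mul_sum]
        gcongr
    refine (Finset.sum_le_sum h1).trans ?_
    rw [Finset.sum_const, nsmul_eq_mul]
    have h6 : (T.card : ℝ) * 2 ≤ (6 * 2^(4*m^2))^N := by
      calc (T.card : ℝ) * 2 ≤ (3 * 2^(4*m^2))^N * 2^N := by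
            gcongr
            exact le_self_pow₀ (by norm_num) (by omega)
        _ = _ := by rw [← mul_pow]; congr 1; ring
    calc _ = (2 ^ (Fintype.card (∀ k, Fin (n k))) * Real.exp (L^2/2)) * ((T.card : ℝ) * 2) := by ring
      _ ≤ (2 ^ (Fintype.card (∀ k, Fin (n k))) * Real.exp (L^2/2)) * (6 * 2^(4*m^2))^N := by gcongr
      _ = _ := by simp only [B]; ring
  obtain ⟨e, -, he⟩ := Finset.exists_le_of_sum_le Finset.univ_nonempty hav
  refine ⟨e, fun z hz1 hz2 => ?_⟩
  have hzT : z ∈ T := Finset.mem_filter.2 ⟨Fintype.mem_piFinset.2 hz1, hz2⟩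
  have hle := (Finset.single_le_sum (f := fun z => Real.exp (∑ j, sgnB (e j) * (L * a z j)) +
    Real.exp (∑ j, sgnB (e j) * (-L * a z j))) (fun _ _ => by positivity) hzT).trans he
  have hB : B = Real.exp (L^2 * (Real.log (6 * 2^(4*m^2)) + 1/2)) := by
    have : (6 * 2^(4*m^2) : ℝ)^N = Real.exp (L^2 * Real.log (6 * 2^(4*m^2))) := by
      rw [hL2, ← Real.log_pow, Real.exp_log (by positivity)]
    simp only [B]
    rw [this, ← Real.exp_add]; congr 1; ring
  rw [hB] at hle
  set S := ∑ j : ∀ k, Fin (n k), sgnB (e j) * ∏ k, scal m (z k) (j k) with hS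
  have e1 : ∑ j, sgnB (e j) * (L * a z j) = L * S := by
    rw [hS, Finset.mul_sum]; exact Finset.sum_congr rfl fun j _ => by simp only [a]; ring
  have e2 : ∑ j, sgnB (e j) * (-L * a z j) = -(L * S) := by
    rw [hS, Finset.mul_sum, ← Finset.sum_neg_distrib]
    exact Finset.sum_congr rfl fun j _ => by simp only [a]; ring
  simp only [e1, e2] at hle
  have f1 : L * S ≤ L^2 * (Real.log (6 * 2^(4*m^2)) + 1/2) :=
    Real.exp_le_exp.1 (by linarith [Real.exp_pos (-(L*S))])
  have f2 : -(L * S) ≤ L^2 * (Real.log (6 * 2^(4*m^2)) + 1/2) :=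
    Real.exp_le_exp.1 (by linarith [Real.exp_pos (L*S)])
  have hLL : √(∑ k, (n k : ℝ)) = L := by rw [hL, hN]; push_cast; rfl
  rw [hLL, abs_le]
  constructor
  · refine le_of_mul_le_mul_left ?_ hLp
    linarith
  · refine le_of_mul_le_mul_left ?_ hLp
    linarith

/-- real form -/
def rform {m : ℕ} {n : Fin m → ℕ} (c : (∀ k, Fin (n k)) → ℝ) :
    ContinuousMultilinearMap ℝ (fun k => EuclideanSpace ℝ (Fin (n k))) ℝ :=
  ∑ j : ∀ k, Fin (n k), c j • (ContinuousMultilinearMap.mkPiAlgebra ℝ (Fin m) ℝ).compContinuousLinearMap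
    fun k => (EuclideanSpace.proj (j k) : EuclideanSpace ℝ (Fin (n k)) →L[ℝ] ℝ)

lemma rform_apply {m : ℕ} {n : Fin m → ℕ} (c : (∀ k, Fin (n k)) → ℝ)
    (x : ∀ k, EuclideanSpace ℝ (Fin (n k))) :
    rform c x = ∑ j : ∀ k, Fin (n k), c j * ∏ k, x k (j k) := by
  simp [rform]

lemma real_ksz {m : ℕ} (hm : 0 < m) (n : Fin m → ℕ) (hn : ∀ k, 0 < n k) :
    ∃ e : (∀ k, Fin (n k)) → Bool, ∀ x : ∀ k, Fin (n k) → ℝ,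
      |∑ j : ∀ k, Fin (n k), sgnB (e j) * ∏ k, x k (j k)|
        ≤ 2 * ((Real.log (6 * 2^(4*m^2)) + 1/2) * √(∑ k, (n k : ℝ))) *
          ∏ k, √(∑ i, (x k i)^2) := by
  obtain ⟨e, he⟩ := exists_good hm n hn
  refine ⟨e, fun x => ?_⟩
  set M := (Real.log (6 * 2^(4*m^2)) + 1/2) * √(∑ k, (n k : ℝ)) with hM
  have hm' : (0:ℝ) < m := by exact_mod_cast hm
  have hM0 : 0 ≤ M := by
    have : 0 ≤ Real.log (6 * 2^(4*m^2)) := Real.log_nonneg (by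
      have : (1:ℝ) ≤ 2^(4*m^2) := one_le_pow₀ (by norm_num)
      linarith)
    positivity
  set f := rform (fun j => sgnB (e j)) with hf
  have key : ∀ y : ∀ k, EuclideanSpace ℝ (Fin (n k)), (∀ k, ‖y k‖ ≤ 1) → ‖f y‖ ≤ M + ‖f‖ / 2 := by
    intro y hy
    have hy' : ∀ k, ∑ i, (y k i)^2 ≤ 1 := by
      intro k
      have := EuclideanSpace.norm_sq_eq (y k)
      simp only [Real.norm_eq_abs, sq_abs] at this
      rw [← this]
      exact pow_le_one₀ (norm_nonneg _) (hy k)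
    choose z hz1 hz2 hz3 using fun k => exists_net m (n k) hm (hn k) (y k) (hy' k)
    let w : ∀ k, EuclideanSpace ℝ (Fin (n k)) := fun k => WithLp.toLp 2 (scal m (z k))
    have hw : ‖f w‖ ≤ M := by
      rw [hf, rform_apply, Real.norm_eq_abs]
      exact he z hz1 hz2
    have hw1 : ‖w‖ ≤ 1 := by
      rw [pi_norm_le_iff_of_nonneg zero_le_one]
      intro k
      rw [EuclideanSpace.norm_eq]
      apply Real.sqrt_le_one.2
      simpa [w] using hz2 k
    have hy1 : ‖y‖ ≤ 1 := (pi_norm_le_iff_of_nonneg zero_le_one).2 hy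
    have hyw : ‖y - w‖ ≤ 1 / (2*m) := by
      rw [pi_norm_le_iff_of_nonneg (by positivity)]
      intro k
      rw [EuclideanSpace.norm_eq]
      apply Real.sqrt_le_iff.2 ⟨by positivity, ?_⟩
      simpa [w] using hz3 k
    have hd := f.norm_image_sub_le y w
    have h1 : ‖f‖ * (Fintype.card (Fin m)) * max ‖y‖ ‖w‖ ^ (Fintype.card (Fin m) - 1) * ‖y - w‖
        ≤ ‖f‖ * m * 1 * (1/(2*m)) := by
      rw [Fintype.card_fin]
      gcongr
      exact pow_le_one₀ (le_max_of_le_left (norm_nonneg _)) (max_le hy1 hw1)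
    have h2 : ‖f‖ * m * 1 * (1/(2*m)) = ‖f‖/2 := by field_simp
    have h3 : ‖f y‖ ≤ ‖f w‖ + ‖f y - f w‖ := by
      have := norm_add_le (f w) (f y - f w)
      simpa using this
    linarith
  have hfn : ‖f‖ ≤ M + ‖f‖/2 := by
    refine f.opNorm_le_bound (by positivity) fun y => ?_
    have : y = fun k => ‖y k‖ • ((‖y k‖)⁻¹ • y k) := by
      funext k
      by_cases h : y k = 0
      · simp [h]
      · rw [smul_inv_smul₀ (norm_ne_zero_iff.2 h)]
    have e : f y = (∏ k, ‖y k‖) • f (fun k => (‖y k‖)⁻¹ • y k) := by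
      rw [← f.map_smul_univ, ← this]
    rw [e, norm_smul, Real.norm_of_nonneg (by positivity), mul_comm]
    gcongr
    apply key
    intro k
    rw [norm_smul, norm_inv, norm_norm]
    exact inv_mul_le_one
  have := f.le_opNorm (fun k => WithLp.toLp 2 (x k))
  rw [hf, rform_apply, Real.norm_eq_abs, ← hf] at this
  refine this.trans ?_
  simp only [EuclideanSpace.norm_eq, Real.norm_eq_abs, sq_abs]
  gcongr
  linarith

lemma complex_bound {m : ℕ} (n : Fin m → ℕ) (c : (∀ k, Fin (n k)) → ℝ) (R : ℝ) (hR : 0 ≤ R)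
    (h : ∀ x : ∀ k, Fin (n k) → ℝ,
      |∑ j : ∀ k, Fin (n k), c j * ∏ k, x k (j k)| ≤ R * ∏ k, √(∑ i, (x k i)^2))
    (x : ∀ k, Fin (n k) → ℂ) :
    ‖∑ j : ∀ k, Fin (n k), (c j : ℂ) * ∏ k, x k (j k)‖ ≤ 2^m * R * ∏ k, √(∑ i, ‖x k i‖^2) := by
  classical
  let w : Finset (Fin m) → ∀ k, Fin (n k) → ℝ := fun s k i =>
    if k ∈ s then (x k i).re else (x k i).im
  have e : ∑ j : ∀ k, Fin (n k), (c j : ℂ) * ∏ k, x k (j k)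
      = ∑ s : Finset (Fin m), (∏ k ∈ sᶜ, Complex.I) *
        ((∑ j : ∀ k, Fin (n k), c j * ∏ k, w s k (j k) : ℝ) : ℂ) := by
    have : ∀ j : ∀ k, Fin (n k), (c j : ℂ) * ∏ k, x k (j k) = ∑ s : Finset (Fin m),
        (∏ k ∈ sᶜ, Complex.I) * ((c j * ∏ k, w s k (j k) : ℝ) : ℂ) := by
      intro j
      have h1 : ∀ k, x k (j k) = ((x k (j k)).re : ℂ) + Complex.I * ((x k (j k)).im : ℂ) := by
        intro k
        rw [mul_comm]; exact (Complex.re_add_im _).symm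
      rw [Finset.prod_congr rfl fun k _ => h1 k, Fintype.prod_add, Finset.mul_sum]
      refine Finset.sum_congr rfl fun s _ => ?_
      rw [Finset.prod_mul_distrib]
      push_cast
      rw [← Finset.prod_mul_prod_compl s (fun k => (w s k (j k) : ℂ))]
      have e1 : ∏ k ∈ s, (w s k (j k) : ℂ) = ∏ k ∈ s, ((x k (j k)).re : ℂ) :=
        Finset.prod_congr rfl fun k hk => by simp [w, hk]
      have e2 : ∏ k ∈ sᶜ, (w s k (j k) : ℂ) = ∏ k ∈ sᶜ, ((x k (j k)).im : ℂ) :=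
        Finset.prod_congr rfl fun k hk => by simp [w, Finset.mem_compl.1 hk]
      rw [e1, e2]; ring
    simp_rw [this]
    rw [Finset.sum_comm]
    refine Finset.sum_congr rfl fun s _ => ?_
    rw [← Finset.mul_sum]
    push_cast
    rfl
  rw [e]
  refine (norm_sum_le _ _).trans ?_
  have hs : ∀ s : Finset (Fin m), ‖(∏ k ∈ sᶜ, Complex.I) *
        ((∑ j : ∀ k, Fin (n k), c j * ∏ k, w s k (j k) : ℝ) : ℂ)‖
        ≤ R * ∏ k, √(∑ i, ‖x k i‖^2) := by
    intro s
    rw [norm_mul, norm_prod, Complex.norm_real, Real.norm_eq_abs]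
    simp only [Complex.norm_I, Finset.prod_const_one, one_mul]
    refine (h _).trans ?_
    refine mul_le_mul_of_nonneg_left (Finset.prod_le_prod (fun _ _ => Real.sqrt_nonneg _)
      fun k _ => Real.sqrt_le_sqrt (Finset.sum_le_sum fun i _ => ?_)) hR
    rw [← sq_abs]
    gcongr
    simp only [w]
    split_ifs
    · exact Complex.abs_re_le_norm _
    · exact Complex.abs_im_le_norm _
  refine (Finset.sum_le_sum fun s _ => hs s).trans ?_
  rw [Finset.sum_const, Finset.card_univ, Fintype.card_finset, Fintype.card_fin, nsmul_eq_mul]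
  push_cast
  rw [mul_assoc]

/-- analytic family -/
def fam (g : ℝ) (x z : ℂ) : ℂ := (x / ‖x‖) * Complex.exp ((Real.log ‖x‖ * g : ℝ) * (1 - z / 2))

lemma norm_fam (g : ℝ) (x z : ℂ) : ‖fam g x z‖ ≤ ‖x‖ ^ (g * (1 - z.re / 2)) := by
  by_cases h : x = 0
  · simp only [fam, h, zero_div, zero_mul, norm_zero]
    exact Real.rpow_nonneg le_rfl _
  · have hx : 0 < ‖x‖ := norm_pos_iff.2 h
    rw [fam, norm_mul, norm_div, Complex.norm_real, norm_norm, div_self hx.ne', one_mul,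
      Complex.norm_exp, Complex.re_ofReal_mul, Real.rpow_def_of_pos hx]
    apply le_of_eq
    congr 1
    have : (1 - z/2).re = 1 - z.re/2 := by simp
    rw [this]; ring

lemma fam_self (g t : ℝ) (x : ℂ) (h : g * (1 - t/2) = 1) : fam g x t = x := by
  by_cases h0 : x = 0
  · simp [fam, h0]
  · have hx : 0 < ‖x‖ := norm_pos_iff.2 h0
    have : ((Real.log ‖x‖ * g : ℝ) * (1 - (t:ℂ) / 2)) = ((Real.log ‖x‖ : ℝ) : ℂ) := by
      have : Real.log ‖x‖ = Real.log ‖x‖ * (g * (1 - t/2)) := by rw [h, mul_one]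
      conv_rhs => rw [this]
      push_cast; ring
    have hx' : (‖x‖ : ℂ) ≠ 0 := by exact_mod_cast hx.ne'
    rw [fam, this, ← Complex.ofReal_exp, Real.exp_log hx]
    field_simp

lemma interp {m : ℕ} (n : Fin m → ℕ) (c : (∀ k, Fin (n k)) → ℂ) (hc : ∀ j, ‖c j‖ ≤ 1)
    (R : ℝ) (hR : 0 ≤ R)
    (h : ∀ x : ∀ k, Fin (n k) → ℂ,
      ‖∑ j : ∀ k, Fin (n k), c j * ∏ k, x k (j k)‖ ≤ R * ∏ k, √(∑ i, ‖x k i‖^2))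
    (g : ℝ) (hg1 : 1 ≤ g) (hg2 : g ≤ 2)
    (x : ∀ k, Fin (n k) → ℂ) (hx : ∀ k, ∑ i, ‖x k i‖ ^ g ≤ 1) :
    ‖∑ j : ∀ k, Fin (n k), c j * ∏ k, x k (j k)‖ ≤ R ^ (2 * (1 - 1/g)) := by
  have hg0 : 0 < g := by linarith
  set t : ℝ := 2 * (1 - 1/g) with ht
  have hgi : 1/g ≤ 1 := by rw [div_le_one hg0]; exact hg1
  have hgi2 : 1/2 ≤ 1/g := one_div_le_one_div_of_le hg0 hg2
  have ht0 : 0 ≤ t := by linarith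
  have ht1 : t ≤ 1 := by linarith
  have hgt : g * (1 - t/2) = 1 := by rw [ht]; field_simp; ring
  have hx1 : ∀ k i, ‖x k i‖ ≤ 1 := by
    intro k i
    have h1 : ‖x k i‖ ^ g ≤ 1 := (Finset.single_le_sum (f := fun i => ‖x k i‖ ^ g)
      (fun i _ => by positivity) (Finset.mem_univ i)).trans (hx k)
    by_contra hcon
    push Not at hcon
    linarith [Real.one_lt_rpow hcon hg0]
  let F : ℂ → ℂ := fun z => ∑ j : ∀ k, Fin (n k), c j * ∏ k, fam g (x k (j k)) z
  have hFt : F t = ∑ j : ∀ k, Fin (n k), c j * ∏ k, x k (j k) := by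
    simp only [F]
    simp_rw [fam_self g t _ hgt]
  have hd : Differentiable ℂ F := by
    simp only [F, fam]
    fun_prop
  have key := Complex.HadamardThreeLines.norm_le_interp_of_mem_verticalClosedStrip₀₁' F
    (z := (t:ℂ)) (a := 1) (b := R) (by simpa [Complex.HadamardThreeLines.verticalClosedStrip] using ⟨ht0, ht1⟩)
    hd.diffContOnCl ?_ ?_ ?_
  · rw [hFt] at key
    simpa using key
  · refine ⟨∑ j : ∀ k, Fin (n k), 1, ?_⟩
    rintro _ ⟨z, hz, rfl⟩
    simp only [Complex.HadamardThreeLines.verticalClosedStrip, Set.mem_preimage, Set.mem_Icc] at hz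
    refine (norm_sum_le _ _).trans (Finset.sum_le_sum fun j _ => ?_)
    rw [norm_mul, norm_prod]
    refine mul_le_one₀ (hc j) (by positivity) (Finset.prod_le_one (fun _ _ => norm_nonneg _) fun k _ => ?_)
    refine (norm_fam _ _ _).trans (Real.rpow_le_one (norm_nonneg _) (hx1 _ _) ?_)
    have : 0 ≤ 1 - z.re/2 := by linarith [hz.2]
    positivity
  · intro z hz
    have hz : z.re = 0 := hz
    calc ‖F z‖ ≤ ∑ j : ∀ k, Fin (n k), ∏ k, ‖x k (j k)‖ ^ g := by
          refine (norm_sum_le _ _).trans (Finset.sum_le_sum fun j _ => ?_)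
          rw [norm_mul, norm_prod]
          calc _ ≤ 1 * ∏ k, ‖fam g (x k (j k)) z‖ := by gcongr; exact hc j
            _ = ∏ k, ‖fam g (x k (j k)) z‖ := one_mul _
            _ ≤ _ := by
              gcongr with k _
              simpa [hz] using norm_fam g (x k (j k)) z
      _ = ∏ k, ∑ i, ‖x k i‖ ^ g := by rw [Fintype.prod_sum]
      _ ≤ 1 := Finset.prod_le_one (fun k _ => Finset.sum_nonneg fun _ _ => by positivity) fun k _ => hx k
  · intro z hz
    have hz : z.re = 1 := hz
    refine (h fun k i => fam g (x k i) z).trans ?_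
    refine mul_le_of_le_one_right hR (Finset.prod_le_one (fun _ _ => by positivity) fun k _ => ?_)
    refine Real.sqrt_le_one.2 (le_trans (Finset.sum_le_sum fun i _ => ?_) (hx k))
    calc ‖fam g (x k i) z‖^2 ≤ (‖x k i‖ ^ (g * (1 - z.re / 2)))^2 := by
          gcongr; exact norm_fam _ _ _
      _ = _ := by
        rw [← Real.rpow_natCast, ← Real.rpow_mul (norm_nonneg _), hz]
        congr 1; push_cast; ring

lemma exists_hom (𝕂 : Type*) [RCLike 𝕂] : ∃ φ : 𝕂 →+* ℂ, ∀ x, ‖φ x‖ = ‖x‖ := by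
  rcases RCLike.I_eq_zero_or_im_I_eq_one (K := 𝕂) with h | h
  · refine ⟨Complex.ofRealHom.comp (RCLike.realRingEquiv h).toRingHom, fun x => ?_⟩
    have := (RCLike.realLinearIsometryEquiv h).norm_map x
    simp only [RingHom.comp_apply, Complex.ofRealHom_eq_coe, Complex.norm_real]
    exact this
  · refine ⟨(RCLike.complexRingEquiv h).toRingHom, fun x => ?_⟩
    exact (RCLike.complexLinearIsometryEquiv h).norm_map x

lemma lp_compare {𝕂 : Type*} [RCLike 𝕂] {n : ℕ} (hn : 0 < n) (p : ℝ≥0∞) (hp : 1 ≤ p) (g : ℝ)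
    (hg : 1 ≤ g) (x : Fin n → 𝕂) (hx : lpNorm p x ≤ 1) :
    ∑ i, ‖x i‖ ^ g ≤ ((n:ℝ) ^ max (1/g - (1/p).toReal) 0) ^ g := by
  have hg0 : 0 < g := by linarith
  have hn' : (1:ℝ) ≤ n := by exact_mod_cast hn
  have hn0 : (0:ℝ) < n := by linarith
  rw [← Real.rpow_mul hn0.le]
  by_cases hpt : p = ∞
  · subst hpt
    simp only [lpNorm, if_true] at hx
    have hx1 : ∀ i, ‖x i‖ ≤ 1 := fun i =>
      (le_ciSup (f := fun i => ‖x i‖) (Set.finite_range _).bddAbove i).trans hx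
    have : max (1/g - (1/(∞:ℝ≥0∞)).toReal) 0 = 1/g := by simp [hg0.le]
    rw [this, one_div_mul_cancel hg0.ne', Real.rpow_one]
    calc ∑ i, ‖x i‖ ^ g ≤ ∑ i : Fin n, (1:ℝ) :=
          Finset.sum_le_sum fun i _ => Real.rpow_le_one (norm_nonneg _) (hx1 i) hg0.le
      _ = n := by simp
  · simp only [lpNorm, if_neg hpt] at hx
    set q := p.toReal with hq
    have hq1 : 1 ≤ q := by
      rw [hq, ← ENNReal.toReal_one]
      exact (ENNReal.toReal_le_toReal ENNReal.one_ne_top hpt).2 hp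
    have hq0 : 0 < q := by linarith
    have hpq : (1/p).toReal = 1/q := by simp [hq]
    rw [hpq]
    have hs0 : 0 ≤ ∑ i, ‖x i‖ ^ q := Finset.sum_nonneg fun _ _ => by positivity
    have hs : ∑ i, ‖x i‖ ^ q ≤ 1 := by
      by_contra hcon
      push Not at hcon
      linarith [Real.one_lt_rpow hcon (by positivity : 0 < 1/q)]
    rcases le_total q g with hqg | hqg
    · have : max (1/g - 1/q) 0 = 0 :=
        max_eq_right (by linarith [one_div_le_one_div_of_le hq0 hqg])
      rw [this, zero_mul, Real.rpow_zero]
      refine le_trans (Finset.sum_le_sum fun i _ => ?_) hs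
      have h1 : ‖x i‖ ^ q ≤ 1 := (Finset.single_le_sum (f := fun i => ‖x i‖ ^ q)
        (fun i _ => by positivity) (Finset.mem_univ i)).trans hs
      have h2 : ‖x i‖ ≤ 1 := by
        by_contra hcon
        push Not at hcon
        linarith [Real.one_lt_rpow hcon hq0]
      rcases (norm_nonneg (x i)).eq_or_lt with h0 | h0
      · rw [← h0, Real.zero_rpow hq0.ne', Real.zero_rpow hg0.ne']
      · exact Real.rpow_le_rpow_of_exponent_ge h0 h2 hqg
    · have : max (1/g - 1/q) 0 = 1/g - 1/q :=
        max_eq_left (by linarith [one_div_le_one_div_of_le hg0 hqg])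
      rw [this]
      have hr : 1 ≤ q/g := by rw [le_div_iff₀ hg0]; linarith
      have hr0 : 0 < q/g := by positivity
      have := Real.rpow_sum_le_const_mul_sum_rpow_of_nonneg Finset.univ (f := fun i => ‖x i‖ ^ g)
        hr (fun i _ => by positivity)
      rw [Finset.card_univ, Fintype.card_fin] at this
      have e : ∀ i, (‖x i‖ ^ g) ^ (q/g) = ‖x i‖ ^ q := by
        intro i
        rw [← Real.rpow_mul (norm_nonneg _)]; congr 1; field_simp
      simp_rw [e] at this
      have h3 : (∑ i, ‖x i‖ ^ g) ^ (q/g) ≤ ((n:ℝ) ^ ((1/g - 1/q) * g)) ^ (q/g) := by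
        refine this.trans ?_
        rw [← Real.rpow_mul hn0.le]
        have : (1/g - 1/q) * g * (q/g) = q/g - 1 := by field_simp
        rw [this]
        exact mul_le_of_le_one_right (by positivity) hs
      exact (Real.rpow_le_rpow_iff (Finset.sum_nonneg fun _ _ => by positivity) (by positivity) hr0).1 h3

open Classical in
/-- **The Kahane–Salem–Zygmund-type theorem of Albuquerque and Rezende.**
For positive integers `m, n_1, …, n_m` and `p_1, …, p_m ∈ [1,∞]` there are a constant
`C > 0` depending only on `m` and signs `ε_j ∈ {−1,1}` such that the `m`-linear form
`A z = ∑_j ε_j z^{(1)}_{j 1} ⋯ z^{(m)}_{j m}` satisfies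
`‖A‖ ≤ C · (∑ k n_k) ^ (1 − 1/γ) · ∏ k n_k ^ max (1/γ − 1/p_k) 0`, where
`γ = min 2 (max {p_k : p_k ≤ 2})` (and `γ = 2` if no `p_k ≤ 2`). -/
theorem ksz_albuquerque_rezende {𝕂 : Type*} [RCLike 𝕂] (m : ℕ) (hm : 0 < m) :
    ∃ C : ℝ, 0 < C ∧
      ∀ n : Fin m → ℕ, (∀ k, 0 < n k) → ∀ p : Fin m → ℝ≥0∞, (∀ k, 1 ≤ p k) →
        ∀ γ : ℝ≥0∞,
          γ = (if ∃ k, p k ≤ 2 then min 2 (⨆ k, ⨆ _ : p k ≤ 2, p k) else 2) →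
            ∃ ε : (∀ k, Fin (n k)) → 𝕂, (∀ j, ε j = 1 ∨ ε j = -1) ∧
              opNorm p (coeffForm ε) ≤
                C * (∑ k, (n k : ℝ)) ^ ((1 : ℝ) - (1 / γ).toReal)
                  * ∏ k, (n k : ℝ) ^ max ((1 / γ).toReal - (1 / p k).toReal) 0 := by
  set R0 : ℝ := 2^m * (2 * (Real.log (6 * 2^(4*m^2)) + 1/2)) with hR0
  refine ⟨max 1 R0, lt_of_lt_of_le one_pos (le_max_left _ _), fun n hn p hp γ hγ => ?_⟩
  have hγ2 : γ ≤ 2 := by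
    rw [hγ]; split_ifs
    · exact min_le_left _ _
    · exact le_rfl
  have hγ1 : 1 ≤ γ := by
    rw [hγ]; split_ifs with h
    · obtain ⟨k, hk⟩ := h
      refine le_min one_le_two ((hp k).trans ?_)
      exact le_iSup₂ (f := fun k (_ : p k ≤ 2) => p k) k hk
    · exact one_le_two
  have hγt : γ ≠ ∞ := ne_top_of_le_ne_top (by simp) hγ2
  set g := γ.toReal with hg
  have hg1 : 1 ≤ g := by
    rw [hg, ← ENNReal.toReal_one]
    exact (ENNReal.toReal_le_toReal ENNReal.one_ne_top hγt).2 hγ1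
  have hg2 : g ≤ 2 := by
    have := (ENNReal.toReal_le_toReal hγt (by simp)).2 hγ2
    simpa using this
  have hg0 : 0 < g := by linarith
  have hγg : (1/γ).toReal = 1/g := by simp [hg]
  rw [hγg]
  have hgi : 1/g ≤ 1 := by rw [div_le_one hg0]; exact hg1
  have hgi2 : 1/2 ≤ 1/g := one_div_le_one_div_of_le hg0 hg2
  obtain ⟨e, he⟩ := real_ksz hm n hn
  obtain ⟨φ, hφ⟩ := exists_hom 𝕂
  set N : ℝ := ∑ k, (n k : ℝ) with hN
  have hN0 : 0 ≤ N := Finset.sum_nonneg fun _ _ => by positivity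
  have hlog : 0 ≤ Real.log (6 * 2^(4*m^2)) := Real.log_nonneg (by
      have : (1:ℝ) ≤ 2^(4*m^2) := one_le_pow₀ (by norm_num)
      linarith)
  have hC := complex_bound n (fun j => sgnB (e j)) _ (by positivity) he
  have hnorm : ∀ j, ‖((sgnB (e j) : ℝ) : ℂ)‖ ≤ 1 := by
    intro j; rw [Complex.norm_real]; unfold sgnB; split_ifs <;> simp
  have hI := interp n (fun j => (sgnB (e j) : ℂ)) hnorm _ (by positivity) hC g hg1 hg2
  let ε : (∀ k, Fin (n k)) → 𝕂 := fun j => if e j then 1 else -1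
  have hφε : ∀ j, φ (ε j) = (sgnB (e j) : ℂ) := by
    intro j; simp only [ε, sgnB]; split_ifs <;> simp
  have hbound : (2 ^ m * (2 * ((Real.log (6 * 2 ^ (4 * m ^ 2)) + 1 / 2) * √N))) ^ (2 * (1 - 1/g))
      ≤ max 1 R0 * N ^ (1 - 1/g) := by
    have h1 : 2 ^ m * (2 * ((Real.log (6 * 2 ^ (4 * m ^ 2)) + 1 / 2) * √N)) = R0 * √N := by
      rw [hR0]; ring
    have hR00 : 0 ≤ R0 := by positivity
    rw [h1, Real.mul_rpow hR00 (Real.sqrt_nonneg _)]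
    have h2 : √N ^ (2 * (1 - 1/g)) = N ^ (1 - 1/g) := by
      rw [Real.sqrt_eq_rpow, ← Real.rpow_mul hN0]; congr 1; ring
    rw [h2]
    gcongr
    calc R0 ^ (2 * (1 - 1/g)) ≤ (max 1 R0) ^ (2 * (1 - 1/g)) :=
          Real.rpow_le_rpow hR00 (le_max_right _ _) (by linarith)
      _ ≤ (max 1 R0) ^ (1:ℝ) :=
          Real.rpow_le_rpow_of_exponent_le (le_max_left _ _) (by linarith)
      _ = _ := Real.rpow_one _
  refine ⟨ε, fun j => ?_, ?_⟩
  · simp only [ε]; split_ifs <;> simp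
  refine Real.sSup_le ?_ (by positivity)
  rintro _ ⟨x, hx, rfl⟩
  have happ : coeffForm ε x = ∑ j : ∀ k, Fin (n k), ε j * ∏ k, x k (j k) := by
    simp only [coeffForm, MultilinearMap.sum_apply, MultilinearMap.compLinearMap_apply,
      MultilinearMap.mkPiRing_apply, LinearMap.proj_apply, smul_eq_mul]
    exact Finset.sum_congr rfl fun j _ => mul_comm _ _
  let a : Fin m → ℝ := fun k => (n k : ℝ) ^ max (1/g - (1 / p k).toReal) 0
  have ha : ∀ k, 0 < a k := fun k => Real.rpow_pos_of_pos (by exact_mod_cast hn k) _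
  let y : ∀ k, Fin (n k) → ℂ := fun k i => φ (x k i) / a k
  have hy : ∀ k, ∑ i, ‖y k i‖ ^ g ≤ 1 := by
    intro k
    have := lp_compare (hn k) (p k) (hp k) g hg1 (x k) (hx k)
    have e1 : ∀ i, ‖y k i‖ ^ g = ‖x k i‖ ^ g / (a k) ^ g := by
      intro i
      simp only [y]
      rw [norm_div, hφ, Complex.norm_real, Real.norm_of_nonneg (ha k).le,
        Real.div_rpow (norm_nonneg _) (ha k).le]
    simp_rw [e1]
    rw [← Finset.sum_div, div_le_one (Real.rpow_pos_of_pos (ha k) _)]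
    exact this
  have hF : φ (coeffForm ε x) = (∑ j : ∀ k, Fin (n k), (sgnB (e j) : ℂ) * ∏ k, y k (j k))
      * ((∏ k, a k : ℝ) : ℂ) := by
    rw [happ, map_sum, Finset.sum_mul]
    refine Finset.sum_congr rfl fun j _ => ?_
    rw [map_mul, map_prod, hφε, mul_assoc]
    push_cast
    rw [← Finset.prod_mul_distrib]
    congr 1
    refine Finset.prod_congr rfl fun k _ => ?_
    have : (a k : ℂ) ≠ 0 := by exact_mod_cast (ha k).ne'
    simp only [y]
    field_simp
  rw [← hφ, hF, norm_mul, Complex.norm_real, Real.norm_of_nonneg (Finset.prod_nonneg fun k _ => (ha k).le)]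
  gcongr
  exact (hI y hy).trans hbound
end
end
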